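/- arXiv:2212.07198 — 4 statements merged into one kernel-verified Lean document; each statement's English description precedes it below -/
import Mathlib

section
/- Let a be a positive integer and p a prime number. Then a appears an odd number of times among the partial quotients a₁, …, a_{T_p} of the period of the continued fraction of √p if and only if: (1) in case a is odd: p ≡ 3 (mod 4) and a² < p < (a+2)²; (2) in case a is even: a²/4 < p < (a+2)²/4 (equivalently, a² < 4p < (a+2)²). -/
/-- The sequence of complete quotients of the continued fraction of `x`:
`α₀ = x`, `α_{k+1} = 1/(αₖ - ⌊αₖ⌋)`. -/
noncomputable def cfAlpha (x : ℝ) : ℕ → ℝ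
  | 0 => x
  | k + 1 => 1 / (cfAlpha x k - (⌊cfAlpha x k⌋ : ℝ))

/-- The partial quotients of the continued fraction of `x`: `aₖ = ⌊αₖ⌋`. -/
noncomputable def cfA (x : ℝ) (k : ℕ) : ℤ :=
  ⌊cfAlpha x k⌋

/-- The length of the minimal period of the continued fraction of `x`:
the least `l > 0` with `a_{k+l} = a_k` for all `k ≥ 1`. -/
noncomputable def cfPeriod (x : ℝ) : ℕ :=
  sInf {l : ℕ | 0 < l ∧ ∀ k : ℕ, 1 ≤ k → cfA x (k + l) = cfA x k}

namespace CFP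

/-- quotient -/
def qg (s : ℤ) (x : ℤ × ℤ × ℤ) : ℤ := (x.2.1 + s) / x.2.2

/-- step -/
def stepF (p s : ℤ) (x : ℤ × ℤ × ℤ) : ℤ × ℤ × ℤ :=
  (x.2.2, qg s x * x.2.2 - x.2.1, (p - (qg s x * x.2.2 - x.2.1) ^ 2) / x.2.2)

/-- reversal -/
def rev (x : ℤ × ℤ × ℤ) : ℤ × ℤ × ℤ := (x.2.2, x.2.1, x.1)

/-- reduced triples -/
def Red (p s : ℤ) (x : ℤ × ℤ × ℤ) : Prop :=
  x.1 * x.2.2 = p - x.2.1 ^ 2 ∧ 0 < x.2.1 ∧ x.2.1 ≤ s ∧ 0 < x.1 ∧ 0 < x.2.2 ∧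
    s + 1 ≤ x.2.1 + x.1 ∧ x.1 ≤ x.2.1 + s ∧ s + 1 ≤ x.2.1 + x.2.2 ∧ x.2.2 ≤ x.2.1 + s

lemma rev_rev (x : ℤ × ℤ × ℤ) : rev (rev x) = x := rfl

lemma red_rev {p s : ℤ} {x : ℤ × ℤ × ℤ} (h : Red p s x) : Red p s (rev x) := by
  obtain ⟨h1, h2, h3, h4, h5, h6, h7, h8, h9⟩ := h
  refine ⟨?_, h2, h3, h5, h4, h8, h9, h6, h7⟩
  simp only [rev]; linarith

lemma qg_bounds {s A P B : ℤ} (hB : 0 < B) :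
    qg s (A, P, B) * B ≤ P + s ∧ P + s < qg s (A, P, B) * B + B := by
  simp only [qg]
  constructor
  · exact Int.ediv_mul_le _ hB.ne'
  · have := Int.lt_ediv_add_one_mul_self (P + s) hB
    linarith

lemma step_mul {p s A P B : ℤ} (h : Red p s (A, P, B)) :
    B * ((p - (qg s (A, P, B) * B - P) ^ 2) / B) = p - (qg s (A, P, B) * B - P) ^ 2 := by
  apply Int.mul_ediv_cancel'
  have h1 : A * B = p - P ^ 2 := h.1
  refine ⟨A - qg s (A, P, B) ^ 2 * B + 2 * qg s (A, P, B) * P, ?_⟩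
  linear_combination -h1

lemma red_step {p s : ℤ} (hs1 : s ^ 2 < p) (hs2 : p < (s + 1) ^ 2) {x : ℤ × ℤ × ℤ}
    (h : Red p s x) : Red p s (stepF p s x) := by
  obtain ⟨A, P, B⟩ := x
  have hm := step_mul h
  obtain ⟨h1, h2, h3, h4, h5, h6, h7, h8, h9⟩ := h
  simp only at h1 h2 h3 h4 h5 h6 h7 h8 h9
  obtain ⟨b1, b2⟩ := qg_bounds (s := s) (A := A) (P := P) h5
  have hg : 1 ≤ qg s (A, P, B) := by
    by_contra hc
    have : qg s (A, P, B) * B ≤ 0 := by nlinarith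
    linarith
  have hgB : B ≤ qg s (A, P, B) * B := by nlinarith
  simp only [Red, stepF]
  generalize (p - (qg s (A, P, B) * B - P) ^ 2) / B = C at *
  obtain ⟨Pn, hP⟩ : ∃ Pn, Pn = qg s (A, P, B) * B - P := ⟨_, rfl⟩
  rw [← hP] at hm ⊢
  have c1 : Pn ≤ s := by linarith
  have c2 : s + 1 ≤ Pn + B := by linarith
  have c3 : B ≤ Pn + s := by linarith
  have c4 : 0 < Pn := by linarith
  have c5 : s + 1 ≤ Pn + C := by
    by_contra hc
    have : C ≤ s - Pn := by linarith
    nlinarith [mul_le_mul_of_nonneg_left this h5.le, mul_nonneg (sub_nonneg.2 c1) (sub_nonneg.2 c3)]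
  have c6 : C ≤ Pn + s := by
    by_contra hc
    have : Pn + s + 1 ≤ C := by linarith
    nlinarith [mul_le_mul_of_nonneg_left this h5.le,
      mul_nonneg (sub_nonneg.2 c2) (by linarith : (0:ℤ) ≤ Pn + s + 1)]
  exact ⟨hm, c4, c1, h5, by linarith, c2, c3, c5, c6⟩

lemma qg_rev_step {p s : ℤ} {x : ℤ × ℤ × ℤ} (h : Red p s x) :
    qg s (rev (stepF p s x)) = qg s x := by
  obtain ⟨A, P, B⟩ := x
  obtain ⟨h1, h2, h3, h4, h5, h6, h7, h8, h9⟩ := h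
  simp only at h1 h2 h3 h4 h5 h6 h7 h8 h9
  have e : qg s (rev (stepF p s (A, P, B))) = (qg s (A, P, B) * B - P + s) / B := rfl
  rw [e]
  have : (qg s (A, P, B) * B - P + s) = (s - P) + qg s (A, P, B) * B := by ring
  rw [this, Int.add_mul_ediv_right _ _ h5.ne', Int.ediv_eq_zero_of_lt (by linarith) (by linarith)]
  simp

lemma step_rev_step {p s : ℤ} {x : ℤ × ℤ × ℤ} (h : Red p s x) :
    stepF p s (rev (stepF p s x)) = rev x := by
  have hq := qg_rev_step h
  obtain ⟨A, P, B⟩ := x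
  have e : stepF p s (rev (stepF p s (A, P, B))) =
    (B, qg s (rev (stepF p s (A, P, B))) * B - (qg s (A, P, B) * B - P),
      (p - (qg s (rev (stepF p s (A, P, B))) * B - (qg s (A, P, B) * B - P)) ^ 2) / B) := rfl
  rw [e, hq]
  obtain ⟨h1, h2, h3, h4, h5, h6, h7, h8, h9⟩ := h
  simp only at h1 h5
  have e2 : qg s (A, P, B) * B - (qg s (A, P, B) * B - P) = P := by ring
  rw [e2, ← h1, Int.mul_ediv_cancel _ h5.ne']
  rfl

lemma step_inj {p s : ℤ} {x y : ℤ × ℤ × ℤ} (hx : Red p s x) (hy : Red p s y)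
    (h : stepF p s x = stepF p s y) : x = y := by
  have h1 := step_rev_step hx
  rw [h, step_rev_step hy] at h1
  have := congrArg rev h1
  rw [rev_rev, rev_rev] at this
  exact this.symm

/-- the orbit -/
def orb (p s : ℤ) : ℕ → ℤ × ℤ × ℤ
  | 0 => (1, s, p - s ^ 2)
  | k + 1 => stepF p s (orb p s k)

lemma red_orb {p s : ℤ} (hs : 0 < s) (hs1 : s ^ 2 < p) (hs2 : p < (s + 1) ^ 2) (k : ℕ) : Red p s (orb p s k) := by
  induction k with
  | zero =>
    simp only [orb, Red]
    refine ⟨by ring, hs, le_refl _, by norm_num, by linarith, le_refl _, by linarith, ?_, ?_⟩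
    · linarith
    · nlinarith
  | succ k ih => exact red_step hs1 hs2 ih

lemma orb_cancel {p s : ℤ} (hs : 0 < s) (hs1 : s ^ 2 < p) (hs2 : p < (s + 1) ^ 2) (i m : ℕ) (h : orb p s (i + m) = orb p s i) : orb p s m = orb p s 0 := by
  induction i with
  | zero => simpa using h
  | succ i ih =>
    apply ih
    have e : i + 1 + m = (i + m) + 1 := by ring
    rw [e] at h
    exact step_inj (red_orb hs hs1 hs2 _) (red_orb hs hs1 hs2 _) h

lemma exists_period {p s : ℤ} (hs : 0 < s) (hs1 : s ^ 2 < p) (hs2 : p < (s + 1) ^ 2) : ∃ l, 0 < l ∧ orb p s l = orb p s 0 := by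
  have key : ∃ i j : ℕ, i ≠ j ∧ orb p s i = orb p s j := by
    let S : Finset (ℤ × ℤ × ℤ) := Finset.Icc 0 (2 * s) ×ˢ Finset.Icc 0 (2 * s) ×ˢ Finset.Icc 0 (2 * s)
    have hS : ∀ k, orb p s k ∈ S := by
      intro k
      obtain ⟨h1, h2, h3, h4, h5, h6, h7, h8, h9⟩ := red_orb hs hs1 hs2 k
      simp only [S, Finset.mem_product, Finset.mem_Icc]
      refine ⟨⟨?_, ?_⟩, ⟨?_, ?_⟩, ⟨?_, ?_⟩⟩ <;> linarith
    obtain ⟨i, j, hij, he⟩ := Finite.exists_ne_map_eq_of_infinite (fun k => (⟨orb p s k, hS k⟩ : S))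
    exact ⟨i, j, hij, congrArg Subtype.val he⟩
  obtain ⟨i, j, hij, he⟩ := key
  rcases lt_or_gt_of_ne hij with h | h
  · refine ⟨j - i, by omega, orb_cancel hs hs1 hs2 i _ ?_⟩
    rw [show i + (j - i) = j by omega, he]
  · refine ⟨i - j, by omega, orb_cancel hs hs1 hs2 j _ ?_⟩
    rw [show j + (i - j) = i by omega, he]

lemma orb_add_period {p s : ℤ} {l : ℕ} (hl : orb p s l = orb p s 0) (k : ℕ) :
    orb p s (k + l) = orb p s k := by
  induction k with
  | zero => simpa using hl
  | succ k ih =>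
    have e : k + 1 + l = (k + l) + 1 := by ring
    rw [e]
    simp only [orb]
    rw [ih]

lemma eq_rev_zero {p s : ℤ} {x : ℤ × ℤ × ℤ} (hx : Red p s x) (h : x.2.2 = 1) : x = rev (orb p s 0) := by
  obtain ⟨A, P, B⟩ := x
  obtain ⟨h1, h2, h3, h4, h5, h6, h7, h8, h9⟩ := hx
  simp only at *
  subst h
  have : P = s := by linarith
  subst this
  simp only [rev, orb]
  rw [mul_one] at h1
  rw [h1]

lemma qg_eq_two {p s : ℤ} (hs : 0 < s) {x : ℤ × ℤ × ℤ} (hx : Red p s x) (h : qg s x = 2 * s) : x = rev (orb p s 0) := by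
  apply eq_rev_zero hx
  obtain ⟨A, P, B⟩ := x
  obtain ⟨h1, h2, h3, h4, h5, h6, h7, h8, h9⟩ := hx
  simp only at *
  obtain ⟨b1, b2⟩ := qg_bounds (s := s) (A := A) (P := P) h5
  rw [h] at b1
  by_contra hc
  have : 2 ≤ B := by omega
  nlinarith

lemma qg_rev_zero {p s : ℤ} : qg s (rev (orb p s 0)) = 2 * s := by
  simp only [qg, rev, orb, Int.ediv_one]; ring

lemma step_rev_zero {p s : ℤ} : stepF p s (rev (orb p s 0)) = orb p s 0 := by
  simp only [stepF, qg_rev_zero]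
  simp only [rev, orb, Int.ediv_one]
  have : 2 * s * 1 - s = s := by ring
  rw [this]

lemma rev_orb {p s : ℤ} (hs : 0 < s) (hs1 : s ^ 2 < p) (hs2 : p < (s + 1) ^ 2) {l : ℕ} (hl : orb p s l = orb p s 0) (k : ℕ) (hk : k < l) :
    rev (orb p s k) = orb p s (l - 1 - k) := by
  induction k with
  | zero =>
    apply step_inj (red_rev (red_orb hs hs1 hs2 _)) (red_orb hs hs1 hs2 _)
    rw [step_rev_zero]
    have : l = (l - 1 - 0) + 1 := by omega
    rw [← hl]
    conv_lhs => rw [this]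
    rfl
  | succ k ih =>
    apply step_inj (red_rev (red_orb hs hs1 hs2 _)) (red_orb hs hs1 hs2 _)
    have e : stepF p s (rev (orb p s (k + 1))) = rev (orb p s k) :=
      step_rev_step (red_orb hs hs1 hs2 _)
    rw [e, ih (by omega)]
    have : l - 1 - k = (l - 1 - (k + 1)) + 1 := by omega
    rw [this]
    rfl

lemma orb_parity {p s : ℤ} (hs : 0 < s) (hs1 : s ^ 2 < p) (hs2 : p < (s + 1) ^ 2) (k : ℕ) :
    ¬ ((2 : ℤ) ∣ (orb p s k).1 ∧ (2 : ℤ) ∣ (orb p s k).2.2) := by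
  induction k with
  | zero => simp only [orb]; omega
  | succ k ih =>
    rintro ⟨h1, h2⟩
    apply ih
    have hr := red_orb hs hs1 hs2 k
    have e : orb p s (k + 1) = stepF p s (orb p s k) := rfl
    rw [e] at h1 h2
    generalize orb p s k = x at *
    obtain ⟨A, P, B⟩ := x
    have hm := step_mul hr
    have h0 : A * B = p - P ^ 2 := hr.1
    have h5 : 0 < B := hr.2.2.2.2.1
    simp only [stepF] at h1 h2 ⊢
    refine ⟨?_, h1⟩
    generalize (p - (qg s (A, P, B) * B - P) ^ 2) / B = C at *
    generalize qg s (A, P, B) = g at *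
    have hA : A = C + g * (g * B - 2 * P) := by
      have : B * A = B * (C + g * (g * B - 2 * P)) := by linear_combination h0 - hm
      exact mul_left_cancel₀ h5.ne' this
    rw [hA]
    obtain ⟨b, rfl⟩ := h1
    obtain ⟨c, rfl⟩ := h2
    exact ⟨c + g * (g * b - P), by ring⟩


lemma card_sym (f : ℕ → ℤ) (a : ℤ) (l : ℕ) (hf : ∀ k, 0 < k → k < l → f (l - k) = f k) (hl : 0 < l) :
    Odd ((Finset.Ico 1 l).filter (fun k => f k = a)).card ↔ ∃ h, l = 2 * h ∧ f h = a := by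
  have key : ∀ S : Finset ℕ, (∀ k ∈ S, 0 < k ∧ k < l ∧ l - k ∈ S ∧ l ≠ 2 * k) →
      Even (S.filter (fun k => f k = a)).card := by
    intro S hS
    rw [← ZMod.natCast_eq_zero_iff_even, Finset.card_filter]
    push_cast
    refine Finset.sum_involution (fun k _ => l - k) ?_ ?_ ?_ ?_
    · intro k hk
      obtain ⟨h1, h2, h3, h4⟩ := hS k hk
      simp only [hf k h1 h2]
      exact CharTwo.add_self_eq_zero _
    · intro k hk _ he
      obtain ⟨h1, h2, h3, h4⟩ := hS k hk
      omega
    · intro k hk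
      exact (hS k hk).2.2.1
    · intro k hk
      obtain ⟨h1, h2, h3, h4⟩ := hS k hk
      omega
  rcases Nat.even_or_odd' l with ⟨h, h1 | h1⟩
  · have hE := key ((Finset.Ico 1 l).erase h) (by
      intro k hk
      simp only [Finset.mem_erase, Finset.mem_Ico] at hk ⊢
      omega)
    have hI : Finset.Ico 1 l = insert h ((Finset.Ico 1 l).erase h) := by
      rw [Finset.insert_erase]
      simp only [Finset.mem_Ico]; omega
    rw [hI, Finset.filter_insert]
    split_ifs with hc
    · rw [Finset.card_insert_of_notMem (by simp)]
      exact ⟨fun _ => ⟨h, h1, hc⟩, fun _ => hE.add_one⟩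
    · constructor
      · intro ho
        exact absurd hE (Nat.not_even_iff_odd.2 ho)
      · rintro ⟨hh1, e1, e2⟩
        have : hh1 = h := by omega
        subst this
        exact absurd e2 hc
  · have hE := key (Finset.Ico 1 l) (by
      intro k hk
      simp only [Finset.mem_Ico] at hk ⊢
      omega)
    constructor
    · intro ho
      exact absurd hE (Nat.not_even_iff_odd.2 ho)
    · rintro ⟨hh1, e1, e2⟩
      omega

lemma floor_qg {p s : ℤ} {x : ℝ} (hx1 : (s : ℝ) ≤ x) (hx2 : x < s + 1) {t : ℤ × ℤ × ℤ}
    (ht : Red p s t) : ⌊((t.2.1 : ℝ) + x) / t.2.2⌋ = qg s t := by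
  obtain ⟨A, P, B⟩ := t
  have h5 : 0 < B := ht.2.2.2.2.1
  obtain ⟨b1, b2⟩ := qg_bounds (s := s) (A := A) (P := P) h5
  generalize qg s (A, P, B) = g at *
  have h5r : (0 : ℝ) < B := by exact_mod_cast h5
  have b1r : (g : ℝ) * B ≤ P + s := by exact_mod_cast b1
  have b2r : (P : ℝ) + s + 1 ≤ g * B + B := by exact_mod_cast b2
  simp only
  rw [Int.floor_eq_iff, le_div_iff₀ h5r, div_lt_iff₀ h5r]
  constructor <;> linarith

lemma alpha_orb {p s : ℤ} {x : ℝ} (hs : 0 < s) (hs1 : s ^ 2 < p) (hs2 : p < (s + 1) ^ 2)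
    (hx : x ^ 2 = p) (hx1 : (s : ℝ) < x) (hx2 : x < s + 1) (k : ℕ) :
    cfAlpha x (k + 1) = (((orb p s k).2.1 : ℝ) + x) / (orb p s k).2.2 := by
  induction k with
  | zero =>
    have hf : ⌊x⌋ = s := by
      rw [Int.floor_eq_iff]; exact ⟨hx1.le, hx2⟩
    simp only [cfAlpha, orb, hf]
    push_cast
    rw [← hx]
    have h1 : x - s ≠ 0 := by linarith
    have hsr : (0 : ℝ) < s := by exact_mod_cast hs
    have h2 : x ^ 2 - (s : ℝ) ^ 2 ≠ 0 := by nlinarith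
    field_simp
    ring
  | succ k ih =>
    have hr := red_orb hs hs1 hs2 k
    have hrn := red_orb hs hs1 hs2 (k + 1)
    have hfl := floor_qg hx1.le hx2 hr
    rw [← ih] at hfl
    have e : orb p s (k + 1) = stepF p s (orb p s k) := rfl
    rw [cfAlpha, hfl, ih]
    rw [e] at hrn ⊢
    generalize orb p s k = t at *
    obtain ⟨A, P, B⟩ := t
    have hm := step_mul hr
    obtain ⟨h1, h2, h3, h4, h5, h6, h7, h8, h9⟩ := hrn
    simp only [stepF] at *
    generalize (p - (qg s (A, P, B) * B - P) ^ 2) / B = C at *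
    generalize qg s (A, P, B) = g at *
    have hmr : (B : ℝ) * C = x ^ 2 - (g * B - P) ^ 2 := by
      rw [hx]; exact_mod_cast hm
    have hB : (0 : ℝ) < B := by exact_mod_cast h4
    have hC : (0 : ℝ) < C := by exact_mod_cast h5
    have hP3 : (g * B - P : ℝ) ≤ s := by exact_mod_cast h3
    push_cast
    have e1 : ((P : ℝ) + x) / B - g = (x - (g * B - P)) / B := by
      field_simp; ring
    rw [e1, one_div_div, div_eq_div_iff (by linarith) hC.ne', hmr]
    ring

end CFP

open CFP in
set_option maxHeartbeats 1000000 in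
theorem stmt_0 (a p : ℕ) (ha : 0 < a) (hp : p.Prime) :
    Odd ((Finset.Icc 1 (cfPeriod (Real.sqrt p))).filter
        (fun k => cfA (Real.sqrt p) k = (a : ℤ))).card ↔
      ((Odd a ∧ p % 4 = 3 ∧ a ^ 2 < p ∧ p < (a + 2) ^ 2) ∨
        (Even a ∧ a ^ 2 < 4 * p ∧ 4 * p < (a + 2) ^ 2)) := by
  obtain ⟨s, hs_def⟩ : ∃ s : ℤ, s = (Nat.sqrt p : ℤ) := ⟨_, rfl⟩
  have hpp : Prime (p : ℤ) := Nat.prime_iff_prime_int.1 hp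
  have hs : 0 < s := by
    rw [hs_def]; exact_mod_cast Nat.sqrt_pos.2 hp.pos
  have hs1 : s ^ 2 < (p : ℤ) := by
    have h1 : s ^ 2 ≤ (p : ℤ) := by rw [hs_def]; exact_mod_cast Nat.sqrt_le' p
    rcases h1.lt_or_eq with h | h
    · exact h
    · exfalso
      rw [← h] at hpp
      exact not_prime_pow (by norm_num) hpp
  have hs2 : (p : ℤ) < (s + 1) ^ 2 := by
    rw [hs_def]; exact_mod_cast Nat.lt_succ_sqrt' p
  have hx0 : 0 ≤ Real.sqrt p := Real.sqrt_nonneg _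
  have hx : (Real.sqrt p) ^ 2 = ((p : ℤ) : ℝ) := by
    rw [Real.sq_sqrt (by positivity)]; simp
  have hsr : (0 : ℝ) < s := by exact_mod_cast hs
  have hx1 : (s : ℝ) < Real.sqrt p := by
    apply Real.lt_sqrt_of_sq_lt; exact_mod_cast hs1
  have hx2 : Real.sqrt p < s + 1 := by
    rw [Real.sqrt_lt' (by linarith)]; exact_mod_cast hs2
  have hA : ∀ k, cfA (Real.sqrt p) (k + 1) = qg s (orb p s k) := by
    intro k
    rw [cfA, alpha_orb hs hs1 hs2 hx hx1 hx2]
    exact floor_qg hx1.le hx2 (red_orb hs hs1 hs2 k)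
  have hex := exists_period hs hs1 hs2
  classical
  obtain ⟨l, hl0, hl, hmin⟩ : ∃ l, 0 < l ∧ orb p s l = orb p s 0 ∧
      ∀ m, 0 < m → orb p s m = orb p s 0 → l ≤ m :=
    ⟨Nat.find hex, (Nat.find_spec hex).1, (Nat.find_spec hex).2,
      fun m h1 h2 => Nat.find_min' hex ⟨h1, h2⟩⟩
  have hrev := rev_orb hs hs1 hs2 hl
  have hlast : orb p s (l - 1) = rev (orb p s 0) := by rw [hrev 0 hl0]; rfl
  have hAl : cfA (Real.sqrt p) l = 2 * s := by
    have := hA (l - 1)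
    rw [show l - 1 + 1 = l by omega] at this
    rw [this, hlast, qg_rev_zero]
  have hper : cfPeriod (Real.sqrt p) = l := by
    apply le_antisymm
    · apply Nat.sInf_le
      refine ⟨hl0, fun k hk => ?_⟩
      obtain ⟨k, rfl⟩ : ∃ j, k = j + 1 := ⟨k - 1, by omega⟩
      rw [show k + 1 + l = k + l + 1 by ring, hA, hA, orb_add_period hl]
    · apply le_csInf
      · refine ⟨l, hl0, fun k hk => ?_⟩
        obtain ⟨k, rfl⟩ : ∃ j, k = j + 1 := ⟨k - 1, by omega⟩
        rw [show k + 1 + l = k + l + 1 by ring, hA, hA, orb_add_period hl]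
      · rintro m ⟨hm0, hm⟩
        apply hmin m hm0
        have h1 := hm l hl0
        rw [hAl, show l + m = l - 1 + m + 1 by omega, hA] at h1
        have h2 := qg_eq_two hs (red_orb hs hs1 hs2 _) h1
        rw [← hlast] at h2
        exact orb_cancel hs hs1 hs2 _ _ h2
  rw [hper]
  have hsym : ∀ k, 0 < k → k < l → cfA (Real.sqrt p) (l - k) = cfA (Real.sqrt p) k := by
    intro k hk hkl
    have h1 := hA (k - 1)
    have h2 := hA (l - 1 - k)
    rw [show k - 1 + 1 = k by omega] at h1
    rw [show l - 1 - k + 1 = l - k by omega] at h2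
    rw [h1, h2, ← hrev k hkl, ← qg_rev_step (red_orb hs hs1 hs2 (k - 1))]
    congr 2
    conv_lhs => rw [show k = k - 1 + 1 by omega]
    rfl
  have hmid := card_sym (cfA (Real.sqrt p)) (a : ℤ) l hsym hl0
  -- the middle element
  have hmidval : ∀ h, l = 2 * h → p % 4 = 3 ∧ ∃ P : ℤ, cfA (Real.sqrt p) h = P ∧ P % 2 = 1 ∧
      0 < P ∧ P ≤ s ∧ s < P + 2 := by
    intro h hh
    have r1 := hrev h (by omega)
    rw [show l - 1 - h = h - 1 by omega] at r1
    have r2 : orb p s h = stepF p s (orb p s (h - 1)) := by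
      conv_lhs => rw [show h = h - 1 + 1 by omega]
      rfl
    have hr := red_orb hs hs1 hs2 (h - 1)
    have hne : (orb p s (h - 1)).2.2 ≠ 1 := by
      intro h1
      have h2 := eq_rev_zero hr h1
      rw [← hlast, show l - 1 = h - 1 + h by omega] at h2
      have := hmin h (by omega) (orb_cancel hs hs1 hs2 _ _ h2.symm)
      omega
    have hpar := orb_parity hs hs1 hs2 (h - 1)
    have hAh := hA (h - 1)
    rw [show h - 1 + 1 = h by omega] at hAh
    rw [r2] at r1
    generalize orb p s (h - 1) = t at *
    obtain ⟨A, P, B⟩ := t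
    have e : qg s (A, P, B) * B - P = P := congrArg (fun y => y.2.1) r1
    obtain ⟨h1, h2, h3, h4, h5, h6, h7, h8, h9⟩ := hr
    simp only at h1 h2 h3 h4 h5 h6 h7 h8 h9 hne hpar
    have hPp : P < p := by nlinarith
    have hcop : IsCoprime P B := by
      have hc : IsCoprime P (p : ℤ) := by
        rw [isCoprime_comm]
        refine (hpp.irreducible.coprime_iff_not_dvd).2 ?_
        intro hd
        exact absurd (Int.le_of_dvd h2 hd) (by linarith)
      have : (p : ℤ) = A * B + P * P := by linear_combination -h1
      rw [this] at hc
      exact IsCoprime.of_mul_right_right (IsCoprime.of_add_mul_left_right hc)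
    have hB2 : B ∣ 2 := by
      have : B ∣ 2 * P := ⟨qg s (A, P, B), by linear_combination -e⟩
      exact hcop.symm.dvd_of_dvd_mul_right this
    have hB : B = 2 := by
      have := Int.le_of_dvd (by norm_num) hB2
      omega
    subst hB
    have hg : qg s (A, P, 2) = P := by linarith
    have hA2 : ¬ (2 : ℤ) ∣ A := fun hd => hpar ⟨hd, dvd_refl _⟩
    have hodd : P % 2 = 1 ∧ (p : ℤ) % 4 = 3 := by
      rcases Int.emod_two_eq_zero_or_one P with h0 | h0
      · exfalso
        obtain ⟨c, rfl⟩ : (2 : ℤ) ∣ P := by omega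
        have hd : (2 : ℤ) ∣ p := ⟨A + 2 * c ^ 2, by linear_combination -h1⟩
        have hdn : 2 ∣ p := by exact_mod_cast hd
        have : p = 2 := ((Nat.prime_dvd_prime_iff_eq Nat.prime_two hp).1 hdn).symm
        subst this
        push_cast at *
        nlinarith
      · refine ⟨h0, ?_⟩
        obtain ⟨c, rfl⟩ : ∃ c, P = 2 * c + 1 := ⟨P / 2, by omega⟩
        obtain ⟨d, rfl⟩ : ∃ d, A = 2 * d + 1 := ⟨A / 2, by omega⟩
        have : (p : ℤ) = 4 * (d + c ^ 2 + c) + 3 := by linear_combination -h1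
        omega
    refine ⟨by omega, P, by rw [hAh, hg], hodd.1, h2, h3, by linarith⟩
  have hoddper : p % 4 = 3 → ∃ h, l = 2 * h := by
    intro h3
    rcases Nat.even_or_odd' l with ⟨h, h1 | h1⟩
    · exact ⟨h, h1⟩
    · exfalso
      have r1 := hrev h (by omega)
      rw [show l - 1 - h = h by omega] at r1
      have hr := red_orb hs hs1 hs2 h
      generalize orb p s h = t at *
      obtain ⟨A, P, B⟩ := t
      have e : B = A := congrArg (fun y => y.1) r1
      subst e
      have e1 : (p : ℤ) = B ^ 2 + P ^ 2 := by
        have := hr.1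
        simp only at this
        linear_combination -this
      have h3z : (p : ℤ) % 4 = 3 := by omega
      rcases Int.even_or_odd' B with ⟨b, rfl | rfl⟩ <;> rcases Int.even_or_odd' P with ⟨c, rfl | rfl⟩ <;>
        ring_nf at e1 <;> omega
  have hsplit : Finset.Icc 1 l = insert l (Finset.Ico 1 l) := by
    ext k
    simp only [Finset.mem_Icc, Finset.mem_insert, Finset.mem_Ico]
    omega
  rw [hsplit, Finset.filter_insert]
  rw [hAl]
  have hev : (2 * s = (a : ℤ)) ↔ (Even a ∧ a ^ 2 < 4 * p ∧ 4 * p < (a + 2) ^ 2) := by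
    constructor
    · intro h
      refine ⟨⟨(a / 2), by omega⟩, ?_, ?_⟩
      · zify; rw [← h]; nlinarith
      · zify; rw [← h]; nlinarith
    · rintro ⟨⟨b, rfl⟩, h1, h2⟩
      zify at h1 h2
      have h3 : (b : ℤ) < s + 1 := by nlinarith
      have h4 : s < (b : ℤ) + 1 := by nlinarith
      push_cast
      omega
  split_ifs with hc
  · rw [Finset.card_insert_of_notMem (by simp), Nat.odd_add_one, hmid]
    refine ⟨fun _ => Or.inr (hev.1 hc), fun _ => ?_⟩
    rintro ⟨h, h1, h2⟩
    obtain ⟨-, P, h3, h4, -⟩ := hmidval h h1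
    omega
  · rw [hmid]
    constructor
    · rintro ⟨h, h1, h2⟩
      obtain ⟨h0, P, h3, h4, h5, h6, h7⟩ := hmidval h h1
      rw [h2] at h3
      subst h3
      refine Or.inl ⟨?_, h0, ?_, ?_⟩
      · rw [Nat.odd_iff]; omega
      · zify; nlinarith
      · zify; nlinarith
    · rintro (⟨h1, h2, h3, h4⟩ | h)
      · obtain ⟨h, hh⟩ := hoddper h2
        refine ⟨h, hh, ?_⟩
        obtain ⟨-, P, e3, e4, e5, e6, e7⟩ := hmidval h hh
        rw [e3]
        zify at h3 h4
        have h5 : (a : ℤ) < s + 1 := lt_of_pow_lt_pow_left₀ 2 (by linarith) (by linarith)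
        have h6 : s < (a : ℤ) + 2 := lt_of_pow_lt_pow_left₀ 2 (by positivity) (by linarith)
        rw [Nat.odd_iff] at h1
        omega
      · exact absurd (hev.2 h) hc
end

section
/- Let a be a positive integer and p an odd prime number. Then a appears an odd number of times among the partial quotients a₁, …, a_{T_{2p}} of the period of the continued fraction of √(2p) if and only if a is even and either a² < 8p < (a+2)², or both a² < 2p < (a+2)² and T_{2p} is even. -/
/-- Reduced states `(Q', P, Q)` of the continued fraction algorithm for `√D`, `r = ⌊√D⌋`. -/
@[ext] structure RState (D r : ℤ) where
  qp : ℤ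
  p : ℤ
  q : ℤ
  p_pos : 0 < p
  p_le : p ≤ r
  qp_pos : 0 < qp
  q_pos : 0 < q
  lt_qp : r < p + qp
  lt_q : r < p + q
  eqn : p ^ 2 + q * qp = D

namespace RState

variable {D r : ℤ}

/-- reversal -/
def rev (s : RState D r) : RState D r :=
  ⟨s.q, s.p, s.qp, s.p_pos, s.p_le, s.q_pos, s.qp_pos, s.lt_q, s.lt_qp, by
    have := s.eqn; linarith [mul_comm s.q s.qp]⟩

theorem rev_rev (s : RState D r) : s.rev.rev = s := rfl

/-- partial quotient -/
def quo (s : RState D r) : ℤ := (s.p + r) / s.q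

theorem quo_le (s : RState D r) : s.quo * s.q ≤ s.p + r :=
  Int.ediv_mul_le _ s.q_pos.ne'

theorem lt_quo (s : RState D r) : s.p + r < s.quo * s.q + s.q := by
  have := Int.lt_ediv_add_one_mul_self (s.p + r) s.q_pos
  unfold quo; linarith

theorem q_le (hD : D < (r + 1) ^ 2) (s : RState D r) : s.q ≤ s.p + r := by
  by_contra h
  push Not at h
  have h1 := s.eqn
  have h2 := s.lt_qp
  have h3 := s.p_pos
  have h4 := s.p_le
  nlinarith [mul_le_mul (show s.p + r + 1 ≤ s.q by linarith) (show r + 1 - s.p ≤ s.qp by linarith)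
    (by linarith) (by linarith)]

theorem quo_pos (hD : D < (r + 1) ^ 2) (s : RState D r) : 1 ≤ s.quo := by
  unfold quo
  rw [Int.le_ediv_iff_mul_le s.q_pos]
  linarith [s.q_le hD]

/-- one step of the algorithm -/
def step (hr : r ^ 2 < D) (hD : D < (r + 1) ^ 2) (s : RState D r) : RState D r :=
  have e : (s.quo * s.q - s.p) ^ 2 + (s.qp + s.quo * (s.p - (s.quo * s.q - s.p))) * s.q = D := by
    have := s.eqn; linear_combination this
  have h2 : s.quo * s.q - s.p ≤ r := by linarith [s.quo_le]
  have h1 : 0 < s.quo * s.q - s.p := by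
    have := s.lt_quo
    rcases le_or_gt s.q r with h | h
    · linarith
    · have := s.quo_pos hD
      have := s.p_le
      nlinarith [s.q_pos]
  have h3 : 0 < s.qp + s.quo * (s.p - (s.quo * s.q - s.p)) := by
    have : 0 < (s.qp + s.quo * (s.p - (s.quo * s.q - s.p))) * s.q := by nlinarith
    exact pos_of_mul_pos_left this s.q_pos.le
  { qp := s.q
    p := s.quo * s.q - s.p
    q := s.qp + s.quo * (s.p - (s.quo * s.q - s.p))
    p_pos := h1
    p_le := h2
    qp_pos := s.q_pos
    q_pos := h3
    lt_qp := by linarith [s.lt_quo]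
    lt_q := by
      by_contra h
      push Not at h
      have h5 : s.q ≤ s.quo * s.q := by nlinarith [s.quo_pos hD, s.q_pos]
      have h6 := s.p_le
      have h7 : s.q ≤ r + (s.quo * s.q - s.p) := by linarith
      generalize s.quo * s.q - s.p = P at *
      generalize s.qp + s.quo * (s.p - P) = Q at *
      nlinarith [mul_le_mul (show Q ≤ r - P by linarith) h7 s.q_pos.le (by linarith)]
    eqn := e }

theorem quo_rev_step (hr : r ^ 2 < D) (hD : D < (r + 1) ^ 2) (s : RState D r) :
    (s.step hr hD).rev.quo = s.quo := by
  show (s.quo * s.q - s.p + r) / s.q = s.quo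
  have h1 := s.p_le
  have h2 := s.lt_q
  apply le_antisymm
  · apply Int.le_of_lt_add_one
    rw [Int.ediv_lt_iff_lt_mul s.q_pos]; linarith
  · rw [Int.le_ediv_iff_mul_le s.q_pos]; linarith

theorem step_rev_step (hr : r ^ 2 < D) (hD : D < (r + 1) ^ 2) (s : RState D r) :
    (s.step hr hD).rev.step hr hD = s.rev := by
  have h := quo_rev_step hr hD s
  have hq : (s.step hr hD).rev.q = s.q := rfl
  have hp : (s.step hr hD).rev.p = s.quo * s.q - s.p := rfl
  have hqp : (s.step hr hD).rev.qp = s.qp + s.quo * (s.p - (s.quo * s.q - s.p)) := rfl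
  generalize (s.step hr hD).rev = t at *
  ext
  · exact hq
  · show t.quo * t.q - t.p = s.p
    rw [h, hq, hp]; ring
  · show t.qp + t.quo * (t.p - (t.quo * t.q - t.p)) = s.qp
    rw [h, hq, hp, hqp]; ring

theorem step_inj (hr : r ^ 2 < D) (hD : D < (r + 1) ^ 2) :
    Function.Injective (step hr hD) := by
  intro s t h
  have h1 := step_rev_step hr hD s
  rw [h, step_rev_step hr hD t] at h1
  rw [← rev_rev s, ← h1, rev_rev]

theorem finite (hD : D < (r + 1) ^ 2) : Finite (RState D r) := by
  let f : RState D r → Set.Icc (0 : ℤ) (2 * r) × Set.Icc (0 : ℤ) (2 * r) × Set.Icc (0 : ℤ) (2 * r) :=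
    fun s => (⟨s.qp, s.qp_pos.le, by have := s.rev.q_le hD; have := s.p_le; simp [rev] at *; linarith⟩,
      ⟨s.p, s.p_pos.le, by linarith [s.p_le, s.p_pos]⟩,
      ⟨s.q, s.q_pos.le, by linarith [s.q_le hD, s.p_le]⟩)
  apply Finite.of_injective f
  intro s t h
  simp only [f, Prod.mk.injEq] at h
  exact RState.ext (congrArg Subtype.val h.1) (congrArg Subtype.val h.2.1)
    (congrArg Subtype.val h.2.2)

/-- The initial state (index one). -/
def start (h0 : 0 < r) (hr : r ^ 2 < D) : RState D r :=
  ⟨1, r, D - r ^ 2, h0, le_rfl, one_pos, by linarith, by linarith, by linarith, by ring⟩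

theorem eq_rev_start (h0 : 0 < r) (hr : r ^ 2 < D) (s : RState D r) (h : s.q = 1) :
    s = (start h0 hr).rev := by
  have h1 := s.lt_q
  have h2 := s.p_le
  have h3 := s.eqn
  have hp : s.p = r := by linarith [Int.add_one_le_iff.mpr h1]
  ext
  · show s.qp = D - r ^ 2
    rw [h, hp] at h3; linarith
  · exact hp
  · exact h

theorem quo_rev_start (h0 : 0 < r) (hr : r ^ 2 < D) : (start h0 hr).rev.quo = 2 * r := by
  show (r + r) / 1 = 2 * r
  rw [Int.ediv_one]; ring

theorem quo_eq (h0 : 0 < r) (hr : r ^ 2 < D) (s : RState D r) :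
    s.quo = 2 * r ↔ s = (start h0 hr).rev := by
  constructor
  · intro h
    apply eq_rev_start
    have h1 := s.quo_le
    rw [h] at h1
    have := s.p_le
    have := s.q_pos
    nlinarith
  · rintro rfl; exact quo_rev_start h0 hr

theorem step_rev_start (h0 : 0 < r) (hr : r ^ 2 < D) (hD : D < (r + 1) ^ 2) :
    (start h0 hr).rev.step hr hD = start h0 hr := by
  have h := quo_rev_start h0 hr
  have hq : (start h0 hr).rev.q = 1 := rfl
  have hp : (start h0 hr).rev.p = r := rfl
  have hqp : (start h0 hr).rev.qp = D - r ^ 2 := rfl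
  have e1 : (start h0 hr).qp = 1 := rfl
  have e2 : (start h0 hr).p = r := rfl
  have e3 : (start h0 hr).q = D - r ^ 2 := rfl
  generalize (start h0 hr).rev = t at *
  ext
  · rw [e1]; exact hq
  · show t.quo * t.q - t.p = _
    rw [h, hq, hp, e2]; ring
  · show t.qp + t.quo * (t.p - (t.quo * t.q - t.p)) = _
    rw [h, hq, hp, hqp, e3]; ring

/-- The sequence of states. -/
def seq (h0 : 0 < r) (hr : r ^ 2 < D) (hD : D < (r + 1) ^ 2) (k : ℕ) : RState D r :=
  (step hr hD)^[k] (start h0 hr)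

section
variable (h0 : 0 < r) (hr : r ^ 2 < D) (hD : D < (r + 1) ^ 2)

theorem seq_succ (k : ℕ) : seq h0 hr hD (k + 1) = (seq h0 hr hD k).step hr hD := by
  simp only [seq, Function.iterate_succ_apply']

/-- The period. -/
noncomputable def per : ℕ := Function.minimalPeriod (step hr hD) (start h0 hr)

theorem per_pos : 0 < per h0 hr hD := by
  have := finite hD
  apply Function.minimalPeriod_pos_of_mem_periodicPts
  exact (step_inj hr hD).mem_periodicPts _

theorem seq_add_per (k : ℕ) : seq h0 hr hD (k + per h0 hr hD) = seq h0 hr hD k :=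
  Function.iterate_add_minimalPeriod_eq

theorem seq_eq_start (k : ℕ) : seq h0 hr hD k = start h0 hr ↔ per h0 hr hD ∣ k :=
  Function.isPeriodicPt_iff_minimalPeriod_dvd

theorem seq_eq_rev_start (k : ℕ) :
    seq h0 hr hD k = (start h0 hr).rev ↔ per h0 hr hD ∣ k + 1 := by
  rw [← seq_eq_start, seq_succ]
  constructor
  · intro h; rw [h, step_rev_start]
  · intro h
    apply step_inj hr hD
    rw [h, step_rev_start]

theorem seq_rev (k j : ℕ) (h : k + j + 1 = per h0 hr hD) :
    seq h0 hr hD k = (seq h0 hr hD j).rev := by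
  induction j generalizing k with
  | zero =>
    show _ = (start h0 hr).rev
    rw [seq_eq_rev_start, ← h]
  | succ j ih =>
    have h1 := ih (k + 1) (by omega)
    rw [seq_succ] at h1
    apply step_inj hr hD
    rw [h1, seq_succ, step_rev_step]

theorem quo_symm (k j : ℕ) (h : k + j + 2 = per h0 hr hD) :
    (seq h0 hr hD k).quo = (seq h0 hr hD j).quo := by
  rw [seq_rev h0 hr hD k (j + 1) (by omega), seq_succ, quo_rev_step]

theorem quo_per_iff (L : ℕ) :
    (∀ k, (seq h0 hr hD (k + L)).quo = (seq h0 hr hD k).quo) ↔ per h0 hr hD ∣ L := by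
  constructor
  · intro h
    obtain ⟨m, hm⟩ : ∃ m, per h0 hr hD = m + 1 := ⟨_, (Nat.succ_pred (per_pos h0 hr hD).ne').symm⟩
    have h1 := h m
    have h2 : seq h0 hr hD m = (start h0 hr).rev := by rw [seq_eq_rev_start, hm]
    rw [h2, quo_rev_start, quo_eq h0 hr, seq_eq_rev_start, show m + L + 1 = (m + 1) + L by ring,
      ← hm] at h1
    exact (Nat.dvd_add_right (dvd_refl _)).mp h1
  · intro h k
    have : seq h0 hr hD (k + L) = seq h0 hr hD k := by
      have h1 := (seq_eq_start h0 hr hD L).mpr h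
      unfold seq at *
      rw [Function.iterate_add_apply, h1]
    rw [this]

/-- the central quotient -/
theorem center (p : ℕ) (hp : p.Prime) (hodd : Odd p) (hDp : D = 2 * p) (m : ℕ)
    (h : 2 * (m + 1) = per h0 hr hD) :
    ∃ c : ℤ, (seq h0 hr hD m).quo = c ∧ 0 < c ∧ Even c ∧ c ^ 2 < D ∧ D < (c + 2) ^ 2 := by
  have h1 := seq_rev h0 hr hD m (m + 1) (by omega)
  have h2 : (seq h0 hr hD m).q ≠ 1 := by
    intro h2
    have := (seq_eq_rev_start h0 hr hD m).mp (eq_rev_start h0 hr _ h2)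
    have := Nat.le_of_dvd (by omega) this
    omega
  rw [seq_succ] at h1
  generalize seq h0 hr hD m = s at *
  have h3 : s.p = s.quo * s.q - s.p := congrArg RState.p h1
  refine ⟨s.quo, rfl, by linarith [s.quo_pos hD], ?_⟩
  have hpp : (2 : ℤ) < p := by
    have := hp.two_le
    obtain ⟨t, ht⟩ := hodd
    omega
  have hP : Prime (p : ℤ) := Nat.prime_iff_prime_int.mp hp
  have ple := s.p_le
  have eqn := s.eqn
  have eqn' : s.p ^ 2 + s.q * s.qp = 2 * p := eqn.trans hDp
  have p_pos := s.p_pos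
  have q_pos := s.q_pos
  have plt : s.p < p := by nlinarith
  have aux : ∀ u : ℤ, 0 < u → u < p → u ∣ 2 * (p : ℤ) → u ∣ 2 := by
    intro u hu0 hup hdv
    have hnd : ¬ (p : ℤ) ∣ u := fun h => by
      have := Int.le_of_dvd hu0 h
      omega
    have hc : IsCoprime (p : ℤ) u := (hP.irreducible.coprime_iff_not_dvd).mpr hnd
    exact hc.symm.dvd_of_dvd_mul_right hdv
  have key : s.q = 2 := by
    rcases Int.even_or_odd' s.q with ⟨u, hu | hu⟩
    · have hPu : s.p = s.quo * u := by rw [hu] at h3; linarith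
      have hu0 : 0 < u := by linarith
      have hdv : u ∣ 2 * (p : ℤ) := ⟨s.quo ^ 2 * u + 2 * s.qp, by
        rw [← eqn', hPu, hu]; ring⟩
      have hu2 := aux u hu0 (by nlinarith [s.quo_pos hD]) hdv
      have hule := Int.le_of_dvd (by norm_num) hu2
      have : u ≠ 2 := by
        rintro rfl
        rw [hPu, hu] at eqn'
        obtain ⟨t, ht⟩ := hodd
        have : 2 * (s.quo ^ 2 + s.qp) = p := by linarith
        omega
      omega
    · have he : Even s.quo := by
        have : Even (s.quo * s.q) := ⟨s.p, by linarith⟩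
        rcases Int.even_mul.mp this with h | h
        · exact h
        · exact absurd h (by rw [Int.not_even_iff_odd]; exact ⟨u, hu⟩)
      obtain ⟨b, hb⟩ := he
      have hPb : s.p = b * s.q := by
        rw [hb] at h3; linarith
      have hb0 : 0 < b := by have := s.quo_pos hD; omega
      have hdv : s.q ∣ 2 * (p : ℤ) := ⟨b ^ 2 * s.q + s.qp, by
        rw [← eqn', hPb]; ring⟩
      have hu2 := aux s.q q_pos (by nlinarith) hdv
      have hule := Int.le_of_dvd (by norm_num) hu2
      omega
  have hpq : s.p = s.quo := by rw [key] at h3; linarith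
  refine ⟨?_, ?_, ?_⟩
  · have : Even (s.p ^ 2) := ⟨p - s.qp, by rw [key] at eqn; linarith⟩
    rw [Int.even_pow' two_ne_zero] at this
    rwa [← hpq]
  · rw [← hpq]; nlinarith
  · have h5 := s.lt_q
    rw [key, hpq] at h5
    nlinarith
end

end RState

theorem odd_count (n : ℕ) (f : ℕ → Prop) [DecidablePred f]
    (hf : ∀ i j, 0 < i → 0 < j → i + j = n → (f i ↔ f j)) :
    Odd ((Finset.Ico 1 n).filter f).card ↔ ∃ m, 0 < m ∧ 2 * m = n ∧ f m := by
  classical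
  obtain ⟨A, hA⟩ : ∃ A, A = (Finset.Ico 1 n).filter f := ⟨_, rfl⟩
  rw [← hA]
  have e1 : (A.filter (fun k => 2 * k < n)).card = (A.filter (fun k => n < 2 * k)).card := by
    apply Finset.card_bij (fun k _ => n - k)
    · intro k hk
      simp only [hA, Finset.mem_filter, Finset.mem_Ico] at hk ⊢
      refine ⟨⟨by omega, (hf k (n - k) (by omega) (by omega) (by omega)).mp hk.1.2⟩, by omega⟩
    · intro i hi j hj
      simp only [hA, Finset.mem_filter, Finset.mem_Ico] at hi hj ⊢
      omega
    · intro k hk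
      simp only [hA, Finset.mem_filter, Finset.mem_Ico] at hk ⊢
      refine ⟨n - k, ⟨⟨by omega, (hf k (n - k) (by omega) (by omega) (by omega)).mp hk.1.2⟩,
        by omega⟩, by omega⟩
  have e2 := Finset.card_filter_add_card_filter_not (s := A) (fun k => 2 * k < n)
  have e3 := Finset.card_filter_add_card_filter_not (s := A.filter (fun k => ¬ 2 * k < n))
    (fun k => n < 2 * k)
  rw [Finset.filter_filter, Finset.filter_filter] at e3
  have e4 : A.filter (fun k => ¬ 2 * k < n ∧ n < 2 * k) = A.filter (fun k => n < 2 * k) := by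
    apply Finset.filter_congr; intros; omega
  have e5 : A.filter (fun k => ¬ 2 * k < n ∧ ¬ n < 2 * k) = A.filter (fun k => 2 * k = n) := by
    apply Finset.filter_congr; intros; omega
  rw [e4, e5] at e3
  have e6 : Odd A.card ↔ Odd (A.filter (fun k => 2 * k = n)).card := by
    simp only [Nat.odd_iff]
    omega
  rw [e6]
  constructor
  · intro h
    obtain ⟨m, hm⟩ := Finset.card_pos.mp h.pos
    simp only [hA, Finset.mem_filter, Finset.mem_Ico] at hm
    exact ⟨m, by omega, hm.2, hm.1.2⟩
  · rintro ⟨m, h0, hm, hfm⟩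
    have : A.filter (fun k => 2 * k = n) = {m} := by
      ext k
      simp only [hA, Finset.mem_filter, Finset.mem_Ico, Finset.mem_singleton]
      constructor
      · intro h; omega
      · rintro rfl; exact ⟨⟨by omega, hfm⟩, hm⟩
    rw [this]; simp

open RState in
theorem alpha_eq {D r : ℤ} (h0 : 0 < r) (hr : r ^ 2 < D) (hD : D < (r + 1) ^ 2) (x : ℝ)
    (hx0 : 0 ≤ x) (hx : x ^ 2 = D) (k : ℕ) :
    cfAlpha x (k + 1) = ((seq h0 hr hD k).p + x) / (seq h0 hr hD k).q ∧
      cfA x (k + 1) = (seq h0 hr hD k).quo := by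
  have h0' : (0 : ℝ) < r := by exact_mod_cast h0
  have hr' : (r : ℝ) ^ 2 < D := by exact_mod_cast hr
  have hD' : (D : ℝ) < (r + 1) ^ 2 := by exact_mod_cast hD
  have x1 : r < x := by nlinarith
  have x2 : x < r + 1 := by nlinarith
  have fl : ∀ s : RState D r, ⌊((s.p : ℝ) + x) / s.q⌋ = s.quo := by
    intro s
    have hq : (0 : ℝ) < s.q := by exact_mod_cast s.q_pos
    rw [Int.floor_eq_iff, le_div_iff₀ hq, div_lt_iff₀ hq]
    have a1 : (s.quo : ℝ) * s.q ≤ s.p + r := by exact_mod_cast s.quo_le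
    have a2 : (s.p : ℝ) + r + 1 ≤ s.quo * s.q + s.q := by exact_mod_cast s.lt_quo
    constructor <;> linarith
  suffices h : cfAlpha x (k + 1) = ((seq h0 hr hD k).p + x) / (seq h0 hr hD k).q by
    refine ⟨h, ?_⟩
    rw [cfA, h, fl]
  induction k with
  | zero =>
    have e : ⌊x⌋ = r := by rw [Int.floor_eq_iff]; constructor <;> linarith
    show 1 / (x - (⌊x⌋ : ℝ)) = ((r : ℤ) + x) / ((D - r ^ 2 : ℤ) : ℝ)
    rw [e]
    push_cast
    rw [div_eq_div_iff (by linarith) (by linarith), ← hx]; ring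
  | succ k ih =>
    rw [cfAlpha, ih, fl, seq_succ]
    generalize seq h0 hr hD k = s
    have hq : (0 : ℝ) < s.q := by exact_mod_cast s.q_pos
    have hn : (0 : ℝ) < (s.step hr hD).q := by exact_mod_cast (s.step hr hD).q_pos
    have hP : ((s.step hr hD).p : ℝ) = s.quo * s.q - s.p := by
      rw [show (s.step hr hD).p = s.quo * s.q - s.p from rfl]; push_cast; ring
    have hle : ((s.step hr hD).p : ℝ) ≤ r := by exact_mod_cast (s.step hr hD).p_le
    have he : ((s.step hr hD).p : ℝ) ^ 2 + (s.step hr hD).q * s.q = D := by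
      exact_mod_cast (s.step hr hD).eqn
    have e1 : ((s.p : ℝ) + x) / s.q - s.quo = (x - (s.step hr hD).p) / s.q := by
      rw [hP]; field_simp; ring
    rw [e1, one_div_div, div_eq_div_iff (by linarith) hn.ne']
    linear_combination he - hx

theorem prop_aux (E X Y Z : Prop) (h : ¬ (X ∧ Y) ∨ ¬ E) :
    ((E ∧ X) → (¬ (E ∧ Y ∧ Z) ↔ E ∧ (X ∨ (Y ∧ Z)))) ∧
      (¬ (E ∧ X) → ((E ∧ Y ∧ Z) ↔ E ∧ (X ∨ (Y ∧ Z)))) := by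
  tauto

set_option maxHeartbeats 2000000 in
theorem stmt_1 (a p : ℕ) (ha : 0 < a) (hp : p.Prime) (hodd : Odd p) :
    Odd ((Finset.Icc 1 (cfPeriod (Real.sqrt (2 * p)))).filter
        (fun k => cfA (Real.sqrt (2 * p)) k = (a : ℤ))).card ↔
      (Even a ∧
        ((a ^ 2 < 8 * p ∧ 8 * p < (a + 2) ^ 2) ∨
          (a ^ 2 < 2 * p ∧ 2 * p < (a + 2) ^ 2 ∧
            Even (cfPeriod (Real.sqrt (2 * p)))))) := by
  have hp3 : 3 ≤ p := by
    have := hp.two_le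
    obtain ⟨t, ht⟩ := hodd
    omega
  obtain ⟨r, D, hDp, h0, hr, hD⟩ : ∃ r D : ℤ, D = 2 * p ∧ 0 < r ∧ r ^ 2 < D ∧ D < (r + 1) ^ 2 := by
    refine ⟨Nat.sqrt (2 * p), 2 * p, rfl, ?_, ?_, ?_⟩
    · have : 0 < Nat.sqrt (2 * p) := Nat.sqrt_pos.mpr (by omega)
      exact_mod_cast this
    · have h1 := Nat.sqrt_le' (2 * p)
      have h2 : Nat.sqrt (2 * p) ^ 2 ≠ 2 * p := by
        intro h
        have he : Even (Nat.sqrt (2 * p) ^ 2) := by rw [h]; simp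
        rw [Nat.even_pow' two_ne_zero] at he
        obtain ⟨u, hu⟩ := he
        rw [hu] at h
        obtain ⟨t, ht⟩ := hodd
        have : p = 2 * u ^ 2 := by linarith [show (u + u) ^ 2 = 4 * u ^ 2 by ring]
        omega
      exact_mod_cast lt_of_le_of_ne h1 h2
    · exact_mod_cast Nat.lt_succ_sqrt' (2 * p)
  set x := Real.sqrt (2 * p) with hxdef
  have hx : x ^ 2 = D := by
    rw [hxdef, Real.sq_sqrt (by positivity), hDp]; push_cast; ring
  have hA := fun k => (alpha_eq h0 hr hD x (Real.sqrt_nonneg _) hx k).2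
  have hper : cfPeriod x = RState.per h0 hr hD := by
    have hset : {l : ℕ | 0 < l ∧ ∀ k : ℕ, 1 ≤ k → cfA x (k + l) = cfA x k} =
        {l : ℕ | 0 < l ∧ RState.per h0 hr hD ∣ l} := by
      ext l
      simp only [Set.mem_ofPred_eq]
      rw [← RState.quo_per_iff]
      refine and_congr_right fun _ => ⟨fun h k => ?_, fun h k hk => ?_⟩
      · rw [← hA, ← hA, ← h (k + 1) (by omega)]; congr 1; ring
      · obtain ⟨k, rfl⟩ := Nat.exists_eq_add_of_le' hk
        rw [show k + 1 + l = (k + l) + 1 by ring, hA, hA, h]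
    rw [cfPeriod, hset]
    apply le_antisymm
    · exact Nat.sInf_le ⟨RState.per_pos h0 hr hD, dvd_rfl⟩
    · have hm := Nat.sInf_mem (s := {l : ℕ | 0 < l ∧ RState.per h0 hr hD ∣ l})
        ⟨_, RState.per_pos h0 hr hD, dvd_rfl⟩
      exact Nat.le_of_dvd hm.1 hm.2
  rw [hper]
  have hlast : cfA x (RState.per h0 hr hD) = 2 * r := by
    obtain ⟨m, hm⟩ : ∃ m, RState.per h0 hr hD = m + 1 :=
      ⟨_, (Nat.succ_pred (RState.per_pos h0 hr hD).ne').symm⟩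
    rw [hm, hA, RState.quo_eq h0 hr, RState.seq_eq_rev_start, hm]
  have hsym : ∀ i j, 0 < i → 0 < j → i + j = RState.per h0 hr hD →
      (cfA x i = (a : ℤ) ↔ cfA x j = (a : ℤ)) := by
    intro i j hi hj hij
    obtain ⟨i, rfl⟩ := Nat.exists_eq_add_of_le' hi
    obtain ⟨j, rfl⟩ := Nat.exists_eq_add_of_le' hj
    rw [hA, hA, RState.quo_symm h0 hr hD i j (by omega)]
  have hcount := odd_count (RState.per h0 hr hD) (fun k => cfA x k = (a : ℤ)) hsym
  have hcen := fun m h => RState.center h0 hr hD p hp hodd hDp m h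
  have hpos := RState.per_pos h0 hr hD
  generalize RState.per h0 hr hD = n at *
  rw [← Finset.Ico_insert_right hpos, Finset.filter_insert, hlast]
  have c1 : (Even a ∧ (a ^ 2 < 8 * p ∧ 8 * p < (a + 2) ^ 2)) ↔ 2 * r = (a : ℤ) := by
    constructor
    · rintro ⟨⟨b, rfl⟩, h1, h2⟩
      zify at h1 h2
      have h3 : (b : ℤ) < r + 1 := by
        apply lt_of_pow_lt_pow_left₀ 2 (by linarith); push_cast at *; nlinarith
      have h4 : r < (b : ℤ) + 1 := by
        apply lt_of_pow_lt_pow_left₀ 2 (by positivity); push_cast at *; nlinarith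
      push_cast; omega
    · intro h
      refine ⟨?_, ?_, ?_⟩
      · exact ⟨r.toNat, by omega⟩
      · zify; rw [← h]; nlinarith
      · zify; rw [← h]; nlinarith
  have c2 : (Even a ∧ (a ^ 2 < 2 * p ∧ 2 * p < (a + 2) ^ 2) ∧ Even n) ↔
      ∃ m, 0 < m ∧ 2 * m = n ∧ cfA x m = (a : ℤ) := by
    constructor
    · rintro ⟨hae, ⟨h1, h2⟩, ⟨m, hm⟩⟩
      have hm0 : 0 < m := by omega
      obtain ⟨m, rfl⟩ := Nat.exists_eq_add_of_le' hm0
      refine ⟨m + 1, hm0, by omega, ?_⟩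
      obtain ⟨c, hc, c0, ce, h3, h4⟩ := hcen m (by omega)
      rw [hA, hc]
      zify at h1 h2
      have h5 : (a : ℤ) < c + 2 := by
        apply lt_of_pow_lt_pow_left₀ 2 (by linarith); linarith
      have h6 : c < (a : ℤ) + 2 := by
        apply lt_of_pow_lt_pow_left₀ 2 (by positivity); linarith
      obtain ⟨u, hu⟩ := hae
      obtain ⟨v, hv⟩ := ce
      omega
    · rintro ⟨m, hm0, hm, h⟩
      obtain ⟨m, rfl⟩ := Nat.exists_eq_add_of_le' hm0
      obtain ⟨c, hc, c0, ce, h3, h4⟩ := hcen m (by omega)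
      rw [hA, hc] at h
      subst h
      refine ⟨by exact_mod_cast ce, ⟨?_, ?_⟩, ⟨m + 1, by omega⟩⟩
      · zify; linarith
      · zify; linarith
  have c3 : ¬ ((a ^ 2 < 8 * p ∧ 8 * p < (a + 2) ^ 2) ∧ (a ^ 2 < 2 * p ∧ 2 * p < (a + 2) ^ 2)) ∨ ¬ Even a := by
    by_contra h
    push Not at h
    obtain ⟨⟨⟨h1, h2⟩, h3, h4⟩, h5⟩ := h
    have h6 := c1.mp ⟨h5, h1, h2⟩
    zify at h3
    rw [← h6] at h3
    nlinarith
  have fin' := prop_aux _ _ _ (Even n) c3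
  rw [← and_assoc (a := a ^ 2 < 2 * p)]
  split_ifs with h
  · rw [Finset.card_insert_of_notMem (by simp), Nat.odd_add_one, hcount, ← c2]
    exact fin'.1 (c1.mpr h)
  · rw [hcount, ← c2]
    exact fin'.2 (fun h' => h (c1.mp h'))
end

section
/- Let p be a prime number and let D = p or D = 2p, with D not a perfect square. If T_D is divisible by 4, then 1 appears as a partial quotient in the period of the continued fraction of √D, i.e., there exists k with 1 ≤ k ≤ T_D and aₖ = 1. -/
/-- Integer pairs `(P_k, Q_k)` with `α_k = (P_k + √D) / Q_k`. -/
noncomputable def cfPQ (D : ℕ) : ℕ → ℤ × ℤ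
  | 0 => (0, 1)
  | k + 1 =>
    (cfA (Real.sqrt D) k * (cfPQ D k).2 - (cfPQ D k).1,
      ((D : ℤ) - (cfA (Real.sqrt D) k * (cfPQ D k).2 - (cfPQ D k).1) ^ 2) / (cfPQ D k).2)

lemma sqrt_ne_int {D : ℕ} (hns : ¬ IsSquare D) (z : ℤ) : Real.sqrt D ≠ z := by
  intro h
  have h1 : (Real.sqrt D) ^ 2 = (D : ℝ) := Real.sq_sqrt (by positivity)
  rw [h] at h1
  have h2 : z ^ 2 = (D : ℤ) := by exact_mod_cast h1
  apply hns
  refine ⟨z.natAbs, ?_⟩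
  zify
  rw [← abs_mul, abs_of_nonneg (mul_self_nonneg z), ← h2]; ring

lemma cf_step {D : ℕ} (hns : ¬ IsSquare D) (k : ℕ) (P Q P' Q' a : ℤ) (x : ℝ) (hQ : 0 < Q)
    (hdvd : Q ∣ (D : ℤ) - P ^ 2) (hP : (P : ℝ) < Real.sqrt D)
    (hx : x = (P + Real.sqrt D) / Q) (hax : a = ⌊x⌋) (ha : 1 ≤ a)
    (hP' : P' = a * Q - P) (hQ' : Q' = ((D : ℤ) - P' ^ 2) / Q) :
    Q * Q' = (D : ℤ) - P' ^ 2 ∧ 0 < Q' ∧ (P' : ℝ) < Real.sqrt D ∧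
    1 / (x - (⌊x⌋ : ℝ)) = (P' + Real.sqrt D) / Q' ∧ 1 ≤ ⌊1 / (x - (⌊x⌋ : ℝ))⌋ ∧
    Real.sqrt D - P' < Q ∧ Real.sqrt D - P' < Q' ∧ 0 < P' := by
  have hs : (Real.sqrt D) ^ 2 = (D : ℝ) := Real.sq_sqrt (by positivity)
  have hne := sqrt_ne_int hns P'
  rw [← hax]
  set s := Real.sqrt D with hsdef
  have hQr : (0 : ℝ) < Q := by exact_mod_cast hQ
  have har : (1 : ℝ) ≤ a := by exact_mod_cast ha
  have hPr : (P' : ℝ) = a * Q - P := by rw [hP']; push_cast; ring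
  have hQx : Q * x = P + s := by rw [hx]; field_simp
  have hf : s - P' = Q * (x - a) := by rw [hPr, mul_sub, hQx]; ring
  have hfl : (a : ℝ) ≤ x := by rw [hax]; exact Int.floor_le x
  have hfu : x < a + 1 := by rw [hax]; exact Int.lt_floor_add_one x
  have hd : Q ∣ (D : ℤ) - P' ^ 2 := by
    have : (D : ℤ) - P' ^ 2 = ((D : ℤ) - P ^ 2) + Q * (2 * a * P - a ^ 2 * Q) := by rw [hP']; ring
    rw [this]; exact dvd_add hdvd (dvd_mul_right _ _)
  have hQQ : Q * Q' = (D : ℤ) - P' ^ 2 := by rw [hQ']; exact Int.mul_ediv_cancel' hd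
  have hQQr : (Q : ℝ) * Q' = (s - P') * (s + P') := by
    have : ((Q * Q' : ℤ) : ℝ) = (((D : ℤ) - P' ^ 2 : ℤ) : ℝ) := by rw [hQQ]
    push_cast at this
    rw [this, ← hs]; ring
  have hlt : (P' : ℝ) < s := by
    have : 0 ≤ s - P' := by rw [hf]; exact mul_nonneg hQr.le (by linarith)
    exact lt_of_le_of_ne (by linarith) (Ne.symm hne)
  have hltQ : s - P' < Q := by rw [hf]; nlinarith
  have hsum : (Q : ℝ) < s + P' := by rw [hPr]; nlinarith
  have hQ'r : (0 : ℝ) < Q' := by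
    have : 0 < (Q : ℝ) * Q' := by rw [hQQr]; exact mul_pos (by linarith) (by linarith)
    exact pos_of_mul_pos_right this hQr.le
  have hx0 : 0 < x - a := by
    have : 0 < Q * (x - a) := by rw [← hf]; linarith
    exact pos_of_mul_pos_right this hQr.le
  have hα : 1 / (x - (a : ℝ)) = (P' + s) / Q' := by
    rw [div_eq_div_iff hx0.ne' hQ'r.ne']
    have : (Q : ℝ) * (1 * Q') = Q * ((P' + s) * (x - a)) := by
      rw [one_mul, hQQr, hf]; ring
    exact mul_left_cancel₀ hQr.ne' this
  have hα1 : 1 ≤ 1 / (x - (a : ℝ)) := by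
    rw [le_div_iff₀ hx0]; linarith
  have hltQ' : s - P' < Q' := by
    have : (s - P') * Q < Q' * Q := by
      rw [mul_comm (Q' : ℝ), hQQr]; exact mul_lt_mul_of_pos_left hsum (by linarith)
    exact lt_of_mul_lt_mul_right this hQr.le
  refine ⟨hQQ, by exact_mod_cast hQ'r, hlt, hα, ?_, hltQ, hltQ', ?_⟩
  · rw [Int.le_floor]; exact_mod_cast hα1
  · have : (Q' : ℝ) ≤ P' + s := by
      rw [hα, le_div_iff₀ hQ'r] at hα1; linarith
    have : (0 : ℝ) < P' := by linarith
    exact_mod_cast this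

lemma cf_inv {D : ℕ} (hns : ¬ IsSquare D) (k : ℕ) :
    0 < (cfPQ D k).2 ∧ (cfPQ D k).2 ∣ (D : ℤ) - (cfPQ D k).1 ^ 2 ∧
    ((cfPQ D k).1 : ℝ) < Real.sqrt D ∧
    cfAlpha (Real.sqrt D) k = ((cfPQ D k).1 + Real.sqrt D) / (cfPQ D k).2 ∧
    1 ≤ cfA (Real.sqrt D) k := by
  induction k with
  | zero =>
    have hD : 1 ≤ D := by
      rcases Nat.eq_zero_or_pos D with h | h
      · exact absurd ⟨0, by simp [h]⟩ hns
      · exact h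
    have h1 : (1 : ℝ) ≤ Real.sqrt D := by
      rw [Real.one_le_sqrt]; exact_mod_cast hD
    refine ⟨by simp [cfPQ], by simp [cfPQ], ?_, by simp [cfPQ, cfAlpha], ?_⟩
    · simp only [cfPQ]; push_cast; linarith
    · simp only [cfA, cfAlpha]; rw [Int.le_floor]; exact_mod_cast h1
  | succ k ih =>
    obtain ⟨h1, h2, h3, h4, h5⟩ := ih
    obtain ⟨g1, g2, g3, g4, g5, g6, g7, g8⟩ := cf_step hns k _ _ (cfPQ D (k+1)).1 (cfPQ D (k+1)).2
      (cfA (Real.sqrt D) k) _ h1 h2 h3 h4 rfl h5 rfl rfl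
    exact ⟨g2, Dvd.intro_left _ g1, g3, g4, g5⟩

lemma cf_red {D : ℕ} (hns : ¬ IsSquare D) (k : ℕ) :
    (cfPQ D k).2 * (cfPQ D (k+1)).2 = (D : ℤ) - (cfPQ D (k+1)).1 ^ 2 ∧
    Real.sqrt D - (cfPQ D (k+1)).1 < (cfPQ D (k+1)).2 ∧ 0 < (cfPQ D (k+1)).1 := by
  obtain ⟨h1, h2, h3, h4, h5⟩ := cf_inv hns k
  obtain ⟨g1, g2, g3, g4, g5, g6, g7, g8⟩ := cf_step hns k _ _ (cfPQ D (k+1)).1 (cfPQ D (k+1)).2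
      (cfA (Real.sqrt D) k) _ h1 h2 h3 h4 rfl h5 rfl rfl
  exact ⟨g1, g7, g8⟩

lemma cf_P (D k : ℕ) : (cfPQ D (k+1)).1 =
    cfA (Real.sqrt D) k * (cfPQ D k).2 - (cfPQ D k).1 := rfl

/-- Backward determinism. -/
lemma cf_back {D : ℕ} (hns : ¬ IsSquare D) (k : ℕ) :
    cfA (Real.sqrt D) (k+1) = ⌊((cfPQ D (k+2)).1 + Real.sqrt D) / (cfPQ D (k+1)).2⌋ := by
  obtain ⟨h1, h2, h3, h4, h5⟩ := cf_inv hns (k+1)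
  obtain ⟨g1, g2, g3⟩ := cf_red hns k
  have hQr : (0 : ℝ) < (cfPQ D (k+1)).2 := by exact_mod_cast h1
  symm
  rw [Int.floor_eq_iff, le_div_iff₀ hQr, div_lt_iff₀ hQr, cf_P D (k+1)]
  push_cast
  constructor <;> nlinarith

lemma cf_alpha_of_PQ {D : ℕ} (hns : ¬ IsSquare D) {i j : ℕ} (h : cfPQ D i = cfPQ D j) :
    cfAlpha (Real.sqrt D) i = cfAlpha (Real.sqrt D) j := by
  rw [(cf_inv hns i).2.2.2.1, (cf_inv hns j).2.2.2.1, h]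

lemma cf_PQ_of_alpha {D : ℕ} (hns : ¬ IsSquare D) {i j : ℕ}
    (h : cfAlpha (Real.sqrt D) i = cfAlpha (Real.sqrt D) j) : cfPQ D i = cfPQ D j := by
  obtain ⟨h1, _, _, h4, _⟩ := cf_inv hns i
  obtain ⟨g1, _, _, g4, _⟩ := cf_inv hns j
  have hirr : Irrational (Real.sqrt D) := by
    rw [irrational_sqrt_natCast_iff]; exact hns
  rw [h4, g4] at h
  have a1 : (0 : ℝ) < (cfPQ D i).2 := by exact_mod_cast h1
  have a2 : (0 : ℝ) < (cfPQ D j).2 := by exact_mod_cast g1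
  rw [div_eq_div_iff a1.ne' a2.ne'] at h
  have hQ : (cfPQ D i).2 = (cfPQ D j).2 := by
    by_contra hne
    have hne' : (((cfPQ D j).2 : ℝ) - (cfPQ D i).2) ≠ 0 := by
      rw [sub_ne_zero]; exact_mod_cast Ne.symm hne
    apply hirr
    refine ⟨((cfPQ D j).1 * (cfPQ D i).2 - (cfPQ D i).1 * (cfPQ D j).2 : ℚ) /
      ((cfPQ D j).2 - (cfPQ D i).2), ?_⟩
    push_cast
    rw [div_eq_iff hne']
    linarith
  refine Prod.ext ?_ hQ
  rw [hQ] at h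
  have := mul_right_cancel₀ a2.ne' h
  have h' : ((cfPQ D i).1 : ℝ) = (cfPQ D j).1 := by linarith
  exact_mod_cast h'

lemma cf_pred {D : ℕ} (hns : ¬ IsSquare D) {i j : ℕ} (h : cfPQ D (i+2) = cfPQ D (j+2)) :
    cfPQ D (i+1) = cfPQ D (j+1) := by
  have hi := (cf_red hns (i+1)).1
  have hj := (cf_red hns (j+1)).1
  have hpos := (cf_inv hns (j+2)).1
  have hQ : (cfPQ D (i+1)).2 = (cfPQ D (j+1)).2 := by
    simp only [show ∀ n : ℕ, n + 1 + 1 = n + 2 from fun _ => rfl] at hi hj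
    rw [h, ← hj] at hi
    exact mul_right_cancel₀ hpos.ne' hi
  have ha : cfA (Real.sqrt D) (i+1) = cfA (Real.sqrt D) (j+1) := by
    rw [cf_back hns, cf_back hns, h, hQ]
  have p1 := cf_P D (i+1)
  have p2 := cf_P D (j+1)
  simp only [show ∀ n : ℕ, n + 1 + 1 = n + 2 from fun _ => rfl] at p1 p2
  refine Prod.ext ?_ hQ
  rw [h, ha, hQ] at p1
  linarith

lemma cf_pred_iter {D : ℕ} (hns : ¬ IsSquare D) (i l : ℕ) (h : cfPQ D (i+1) = cfPQ D (i+l+1)) :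
    cfPQ D 1 = cfPQ D (l+1) := by
  induction i with
  | zero => simpa using h
  | succ i ih =>
    apply ih
    apply cf_pred hns
    rw [show i + l + 2 = i + 1 + l + 1 by ring]; exact h

lemma cf_alpha_add (x : ℝ) (i j : ℕ) (h : cfAlpha x i = cfAlpha x j) (n : ℕ) :
    cfAlpha x (i + n) = cfAlpha x (j + n) := by
  induction n with
  | zero => simpa using h
  | succ n ih => 
    rw [← add_assoc, ← add_assoc]
    simp only [cfAlpha]; rw [ih]

lemma cf_mem {D : ℕ} {l : ℕ} (hl : 0 < l)
    (h : cfAlpha (Real.sqrt D) 1 = cfAlpha (Real.sqrt D) (l+1)) :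
    l ∈ {l : ℕ | 0 < l ∧ ∀ k : ℕ, 1 ≤ k → cfA (Real.sqrt D) (k + l) = cfA (Real.sqrt D) k} := by
  refine ⟨hl, fun k hk => ?_⟩
  obtain ⟨n, rfl⟩ := Nat.exists_eq_add_of_le hk
  unfold cfA
  rw [cf_alpha_add _ _ _ h n, show 1 + n + l = l + 1 + n by ring]

lemma cf_nonempty {D : ℕ} (hns : ¬ IsSquare D) :
    {l : ℕ | 0 < l ∧ ∀ k : ℕ, 1 ≤ k → cfA (Real.sqrt D) (k + l) = cfA (Real.sqrt D) k}.Nonempty := by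
  have hmem : ∀ k, cfPQ D (k+1) ∈ Finset.Icc (0:ℤ) D ×ˢ Finset.Icc (0:ℤ) D := by
    intro k
    obtain ⟨h1, h2, h3, h4, h5⟩ := cf_inv hns (k+1)
    obtain ⟨g1, g2, g3⟩ := cf_red hns k
    have h0 := (cf_inv hns k).1
    rw [Finset.mem_product, Finset.mem_Icc, Finset.mem_Icc]
    refine ⟨⟨g3.le, ?_⟩, h1.le, ?_⟩ <;> nlinarith
  obtain ⟨i, j, hne, hij⟩ := Finite.exists_ne_map_eq_of_infinite
    (fun k : ℕ => (⟨cfPQ D (k+1), hmem k⟩ : (Finset.Icc (0:ℤ) D ×ˢ Finset.Icc (0:ℤ) D : Finset _)))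
  have hij' : cfPQ D (i+1) = cfPQ D (j+1) := by simpa using hij
  have key : ∀ i j : ℕ, i < j → cfPQ D (i+1) = cfPQ D (j+1) → ∃ l, 0 < l ∧ cfPQ D 1 = cfPQ D (l+1) := by
    intro i j hlt h
    obtain ⟨l, rfl⟩ := Nat.exists_eq_add_of_lt hlt
    refine ⟨l+1, by omega, cf_pred_iter hns i (l+1) h⟩
  obtain ⟨l, hl, h⟩ : ∃ l, 0 < l ∧ cfPQ D 1 = cfPQ D (l+1) := by
    rcases lt_or_gt_of_ne hne with h | h
    · exact key i j h hij'
    · exact key j i h hij'.symm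
  exact ⟨l, cf_mem hl (cf_alpha_of_PQ hns h)⟩

lemma cf_rec (x : ℝ) (k : ℕ) (h : 2 ≤ cfA x (k+1)) :
    2 ≤ cfAlpha x (k+1) ∧ cfAlpha x k = cfA x k + 1 / cfAlpha x (k+1) := by
  constructor
  · have := Int.floor_le (cfAlpha x (k+1))
    have h' : (2:ℝ) ≤ cfA x (k+1) := by exact_mod_cast h
    exact h'.trans this
  · simp only [cfAlpha, cfA, one_div, inv_inv]; ring

/-- Equal partial quotients (all at least two) give equal complete quotients. -/
lemma cf_unique (x : ℝ) (i j : ℕ) (h2 : ∀ k, 1 ≤ k → 2 ≤ cfA x k) 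
    (h : ∀ k, cfA x (i + k) = cfA x (j + k)) : cfAlpha x i = cfAlpha x j := by
  have step : ∀ n, |cfAlpha x (i+n) - cfAlpha x (j+n)| ≤
      |cfAlpha x (i+(n+1)) - cfAlpha x (j+(n+1))| * (1/4) := by
    intro n
    obtain ⟨a1, a2⟩ := cf_rec x (i+n) (h2 _ (by omega))
    obtain ⟨b1, b2⟩ := cf_rec x (j+n) (h2 _ (by omega))
    rw [← add_assoc, ← add_assoc, a2, b2, h n]
    set u := cfAlpha x (i+n+1)
    set v := cfAlpha x (j+n+1)
    have : (cfA x (j+n) + 1/u - (cfA x (j+n) + 1/v) : ℝ) = (v - u) * (1 / (u*v)) := by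
      field_simp; ring
    rw [this, abs_mul, abs_sub_comm v u]
    apply mul_le_mul_of_nonneg_left _ (abs_nonneg _)
    rw [abs_of_nonneg (by positivity)]
    apply one_div_le_one_div_of_le (by norm_num)
    nlinarith
  have hb : ∀ n, |cfAlpha x (i+n) - cfAlpha x (j+n)| ≤ 1 := by
    intro n
    have := h n
    unfold cfA at this
    exact (Int.abs_sub_lt_one_of_floor_eq_floor this).le
  have hall : ∀ n : ℕ, ∀ m, |cfAlpha x (i+m) - cfAlpha x (j+m)| ≤ (1/4:ℝ)^n := by
    intro n
    induction n with
    | zero => intro m; simpa using hb m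
    | succ n ih =>
      intro m
      calc _ ≤ _ := step m
        _ ≤ (1/4:ℝ)^n * (1/4) := by gcongr; exact ih (m+1)
        _ = _ := by ring
  have hle : |cfAlpha x i - cfAlpha x j| ≤ 0 := by
    refine ge_of_tendsto' (tendsto_pow_atTop_nhds_zero_of_lt_one (r := (1/4:ℝ)) (by norm_num) (by norm_num)) ?_
    intro n
    simpa using hall n 0
  exact sub_eq_zero.mp (abs_nonpos_iff.mp hle)

/-- The doubling transducer. -/
lemma cf_double (x : ℝ) (m : ℕ) (h2 : ∀ k, 1 ≤ k → 2 ≤ cfA x k)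
    (hirr : ∀ k, ∀ z : ℤ, cfAlpha x k ≠ z)
    (h : cfAlpha x (m+1) = 2 * cfAlpha x 1) (n : ℕ) :
    cfAlpha x (m+2*n+1) = 2 * cfAlpha x (2*n+1) := by
  induction n with
  | zero => simpa using h
  | succ n ih =>
    obtain ⟨a1, a2⟩ := cf_rec x (2*n+1) (h2 _ (by omega))
    obtain ⟨b1, b2⟩ := cf_rec x (2*n+2) (h2 _ (by omega))
    obtain ⟨c1, c2⟩ := cf_rec x (m+2*n+1) (h2 _ (by omega))
    obtain ⟨d1, d2⟩ := cf_rec x (m+2*n+2) (h2 _ (by omega))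
    rw [show 2*n+1+1 = 2*n+2 from rfl] at a1 a2
    rw [show 2*n+2+1 = 2*n+3 from rfl] at b1 b2
    rw [show m+2*n+1+1 = m+2*n+2 from rfl] at c1 c2
    rw [show m+2*n+2+1 = m+2*n+3 from rfl] at d1 d2
    have a1' : 2 < cfAlpha x (2*n+2) := lt_of_le_of_ne a1 (by
      have := hirr (2*n+2) 2; exact_mod_cast this.symm)
    have b1' : 2 < cfAlpha x (2*n+3) := lt_of_le_of_ne b1 (by
      have := hirr (2*n+3) 2; exact_mod_cast this.symm)
    have hfl : cfA x (m+2*n+1) = 2 * cfA x (2*n+1) := by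
      unfold cfA at a2 ⊢
      rw [Int.floor_eq_iff, ih, a2]
      have hpos : 0 < 1 / cfAlpha x (2*n+2) := by positivity
      have hlt : 1 / cfAlpha x (2*n+2) < 1/2 := one_div_lt_one_div_of_lt (by norm_num) a1'
      rw [← a2]
      push_cast
      constructor <;> linarith
    have hhalf : cfAlpha x (m+2*n+2) = cfAlpha x (2*n+2) / 2 := by
      rw [ih, a2, hfl] at c2
      push_cast at c2
      have : 1 / cfAlpha x (m+2*n+2) = 2 * (1 / cfAlpha x (2*n+2)) := by linarith
      field_simp at this ⊢
      linarith
    have hpos : 0 < 1 / cfAlpha x (2*n+3) := by positivity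
    have hlt : 1 / cfAlpha x (2*n+3) < 1/2 := one_div_lt_one_div_of_lt (by norm_num) b1'
    rcases Int.even_or_odd' (cfA x (2*n+2)) with ⟨c, hc | hc⟩
    · have hfl2 : cfA x (m+2*n+2) = c := by
        show ⌊_⌋ = _
        rw [Int.floor_eq_iff, hhalf, b2, hc]
        push_cast
        constructor <;> linarith
      rw [hhalf, b2, hfl2, hc] at d2
      push_cast at d2
      have : 1 / cfAlpha x (m+2*n+3) = (1 / cfAlpha x (2*n+3)) / 2 := by linarith
      rw [show m + 2 * (n+1) + 1 = m+2*n+3 by ring, show 2*(n+1)+1 = 2*n+3 by ring]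
      field_simp at this ⊢
      linarith
    · exfalso
      have hfl2 : cfA x (m+2*n+2) = c := by
        show ⌊_⌋ = _
        rw [Int.floor_eq_iff, hhalf, b2, hc]
        push_cast
        constructor <;> linarith
      rw [hhalf, b2, hfl2, hc] at d2
      push_cast at d2
      have e1 : 1 / cfAlpha x (m+2*n+3) = (1 + 1 / cfAlpha x (2*n+3)) / 2 := by linarith
      have e2 : 1 / cfAlpha x (m+2*n+3) ≤ 1/2 := one_div_le_one_div_of_le (by norm_num) d1
      linarith

lemma cf_symm {D T : ℕ} (hns : ¬ IsSquare D) (hT : 0 < T) (h : cfPQ D 1 = cfPQ D (T+1)) (j : ℕ)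
    (hj : j + 1 ≤ T) : (cfPQ D (T-(j+1))).2 = (cfPQ D (j+1)).2 ∧
      (cfPQ D (T-j)).1 = (cfPQ D (j+1)).1 := by
  have hQT : (cfPQ D T).2 = 1 := by
    have e1 := (cf_red hns T).1
    have e2 := (cf_red hns 0).1
    rw [← h] at e1
    simp only [zero_add] at e2
    rw [← e2] at e1
    have := mul_right_cancel₀ (cf_inv hns 1).1.ne' e1
    rw [this]; rfl
  induction j with
  | zero =>
    obtain ⟨S, rfl⟩ : ∃ S, T = S + 1 := ⟨T-1, by omega⟩
    obtain ⟨g1, g2, g3⟩ := cf_red hns S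
    have hlt := (cf_inv hns (S+1)).2.2.1
    have hP : (cfPQ D (S+1)).1 = (cfPQ D 1).1 := by
      have : (cfPQ D 1).1 = ⌊Real.sqrt D⌋ := by simp [cfPQ, cfA, cfAlpha]
      rw [this]; symm; rw [Int.floor_eq_iff]
      rw [hQT] at g2; push_cast at g2
      constructor <;> linarith
    refine ⟨?_, by simpa using hP⟩
    have e2 := (cf_red hns 0).1
    rw [hQT, hP] at g1
    simp only [zero_add] at e2 ⊢
    rw [← e2] at g1
    simpa [cfPQ] using g1
  | succ j ih =>
    obtain ⟨i1, i2⟩ := ih (by omega)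
    obtain ⟨S, rfl⟩ : ∃ S, T = S + (j+2) := ⟨T-(j+2), by omega⟩
    rw [show S + (j+2) - (j+1) = S+1 by omega] at i1
    rw [show S + (j+2) - j = S+2 by omega] at i2
    rw [show S + (j+2) - (j+1+1) = S by omega, show S + (j+2) - (j+1) = S+1 by omega]
    have ha : cfA (Real.sqrt D) (S+1) = cfA (Real.sqrt D) (j+1) := by
      rw [cf_back hns, i1, i2]
      unfold cfA
      rw [(cf_inv hns (j+1)).2.2.2.1]
    have p1 := cf_P D (S+1)
    have p2 := cf_P D (j+1)
    rw [show S+1+1 = S+2 from rfl, i2, ha, i1] at p1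
    have hP : (cfPQ D (S+1)).1 = (cfPQ D (j+1+1)).1 := by linarith
    refine ⟨?_, hP⟩
    have e1 := (cf_red hns S).1
    have e2 := (cf_red hns (j+1)).1
    rw [hP, ← e2, i1, mul_comm] at e1
    exact mul_left_cancel₀ (cf_inv hns (j+1)).1.ne' e1

lemma arith_Q (p D : ℕ) (hp : p.Prime) (hD : D = p ∨ D = 2 * p) (hns : ¬ IsSquare D)
    (P Q Q' a : ℤ) (hP : 0 < P) (hQ : 0 < Q) (hQ' : 0 < Q') (h : Q' * Q = (D : ℤ) - P ^ 2)
    (ha : a * Q = 2 * P) : Q = 1 ∨ Q = 2 := by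
  have hPD : P ^ 2 < D := by nlinarith
  have hp2 := hp.two_le
  rcases hp.eq_two_or_odd' with rfl | hodd
  · rcases hD with rfl | rfl
    · have : P = 1 := by push_cast at hPD; nlinarith
      subst this
      left
      push_cast at h
      nlinarith
    · exact absurd ⟨2, rfl⟩ hns
  · have hpZ : Prime (p : ℤ) := Nat.prime_iff_prime_int.mp hp
    have hnot : ¬ (p : ℤ) ∣ Q := by
      intro hd
      have h1 : (p : ℤ) ∣ 2 * P := ha ▸ Dvd.dvd.mul_left hd a
      rcases hpZ.dvd_or_dvd h1 with h2 | h2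
      · have h3 : p ∣ 2 := by exact_mod_cast h2
        have := (Nat.prime_dvd_prime_iff_eq hp Nat.prime_two).mp h3
        subst this
        exact absurd hodd (by decide)
      · have := Int.le_of_dvd hP h2
        have hD2 : (D : ℤ) ≤ 2 * p := by rcases hD with h | h <;> subst h <;> push_cast <;> linarith
        have : (2:ℤ) ≤ p := by exact_mod_cast hp2
        nlinarith
    have hQ2D : Q ∣ 2 * (D : ℤ) := ⟨a * P + 2 * Q', by linear_combination (-2) * h - P * ha⟩
    have hQ4 : Q ∣ 4 * (p : ℤ) := by
      rcases hD with h | h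
      · subst h; exact hQ2D.trans ⟨2, by ring⟩
      · subst h; exact hQ2D.trans ⟨1, by push_cast; ring⟩
    have hcop : IsCoprime Q (p : ℤ) := ((hpZ.coprime_iff_not_dvd).mpr hnot).symm
    have hQ4' : Q ∣ 4 := hcop.dvd_of_dvd_mul_right hQ4
    have hle : Q ≤ 4 := Int.le_of_dvd (by norm_num) hQ4'
    obtain ⟨t, ht⟩ := hodd
    interval_cases Q
    · left; rfl
    · right; rfl
    · omega
    · exfalso
      have hPe : P = 2 * a := by linarith
      subst hPe
      have : (D : ℤ) = 4 * (Q' + a^2) := by linarith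
      rcases hD with h | h <;> omega

theorem stmt_2 (p D : ℕ) (hp : p.Prime) (hD : D = p ∨ D = 2 * p)
    (hns : ¬ IsSquare D) (h4 : 4 ∣ cfPeriod (Real.sqrt D)) :
    ∃ k : ℕ, 1 ≤ k ∧ k ≤ cfPeriod (Real.sqrt D) ∧ cfA (Real.sqrt D) k = 1 := by
  have hmem := Nat.sInf_mem (cf_nonempty hns)
  have hmin : ∀ l, l ∈ {l : ℕ | 0 < l ∧ ∀ k : ℕ, 1 ≤ k →
      cfA (Real.sqrt D) (k + l) = cfA (Real.sqrt D) k} → cfPeriod (Real.sqrt D) ≤ l :=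
    fun l hl => Nat.sInf_le hl
  change cfPeriod (Real.sqrt D) ∈ _ at hmem
  set T := cfPeriod (Real.sqrt D) with hTdef
  obtain ⟨hT, hper⟩ := hmem
  by_contra hcon
  push Not at hcon
  have h2 : ∀ k, 1 ≤ k → 2 ≤ cfA (Real.sqrt D) k := by
    intro k
    induction k using Nat.strong_induction_on with
    | _ k ih =>
      intro hk
      by_cases hkT : k ≤ T
      · have h1 := (cf_inv hns k).2.2.2.2
        have := hcon k hk hkT
        omega
      · have := ih (k - T) (by omega) (by omega)
        rw [← hper (k-T) (by omega), Nat.sub_add_cancel (by omega)] at this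
        exact this
  have hαT : cfAlpha (Real.sqrt D) 1 = cfAlpha (Real.sqrt D) (T+1) := by
    apply cf_unique _ _ _ h2
    intro k
    rw [← hper (1+k) (by omega)]
    congr 1; ring
  have hPQT := cf_PQ_of_alpha hns hαT
  obtain ⟨c, hc⟩ := h4
  obtain ⟨M, hM⟩ : ∃ M, 2 * c = M + 1 := ⟨2*c-1, by omega⟩
  have hTM : T = 2 * (M + 1) := by omega
  obtain ⟨s1, s2⟩ := cf_symm hns hT hPQT M (by omega)
  rw [show T - M = M+2 by omega] at s2
  have pm := cf_P D (M+1)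
  rw [show M+1+1 = M+2 from rfl, s2] at pm
  obtain ⟨r1, r2, r3⟩ := cf_red hns M
  obtain ⟨i1, i2, i3, i4, i5⟩ := cf_inv hns (M+1)
  have hQ := arith_Q p D hp hD hns _ _ _ (cfA (Real.sqrt D) (M+1)) r3 i1 (cf_inv hns M).1 r1 (by linarith)
  have hα1 : cfAlpha (Real.sqrt D) 1 = 1 / (Real.sqrt D - (⌊Real.sqrt D⌋ : ℝ)) := by simp [cfAlpha]
  have hαm : cfAlpha (Real.sqrt D) (M+2) =
    1 / (cfAlpha (Real.sqrt D) (M+1) - (cfA (Real.sqrt D) (M+1) : ℝ)) := rfl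
  rcases hQ with hQ | hQ
  · have hfl : ⌊Real.sqrt D⌋ = (cfPQ D (M+1)).1 := by
      rw [Int.floor_eq_iff]
      rw [hQ] at r2; push_cast at r2
      constructor <;> linarith
    have ha : cfA (Real.sqrt D) (M+1) = 2 * (cfPQ D (M+1)).1 := by rw [hQ] at pm; linarith
    have : cfAlpha (Real.sqrt D) 1 = cfAlpha (Real.sqrt D) (M+1+1) := by
      rw [hα1, show M+1+1 = M+2 from rfl, hαm, hfl, ha, i4, hQ]
      push_cast
      congr 1; ring
    have := hmin (M+1) (cf_mem (by omega) this)
    omega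
  · have ha : cfA (Real.sqrt D) (M+1) = (cfPQ D (M+1)).1 := by rw [hQ] at pm; linarith
    rw [ha, i4, hQ] at hαm
    rw [hQ] at r2
    push_cast at hαm r2
    have hαm' : cfAlpha (Real.sqrt D) (M+2) = 2 / (Real.sqrt D - (cfPQ D (M+1)).1) := by
      rw [hαm]
      have : Real.sqrt D - (cfPQ D (M+1)).1 ≠ 0 := by linarith
      rw [show ((cfPQ D (M+1)).1 + Real.sqrt D)/2 - ((cfPQ D (M+1)).1 : ℝ) =
        (Real.sqrt D - (cfPQ D (M+1)).1)/2 by ring]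
      field_simp
    have hge : 2 ≤ cfAlpha (Real.sqrt D) (M+2) := (cf_rec _ (M+1) (h2 _ (by omega))).1
    have hsub : 0 < Real.sqrt D - (cfPQ D (M+1)).1 := by linarith
    rw [hαm', le_div_iff₀ hsub] at hge
    have hfl : ⌊Real.sqrt D⌋ = (cfPQ D (M+1)).1 := by
      rw [Int.floor_eq_iff]
      refine ⟨i3.le, lt_of_le_of_ne (by linarith) ?_⟩
      have := sqrt_ne_int hns ((cfPQ D (M+1)).1 + 1)
      push_cast at this
      exact this
    have hdbl : cfAlpha (Real.sqrt D) (2*c+1) = 2 * cfAlpha (Real.sqrt D) 1 := by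
      rw [hM, show M+1+1 = M+2 from rfl, hαm', hα1, hfl]; ring
    have hirr : ∀ k, ∀ z : ℤ, cfAlpha (Real.sqrt D) k ≠ z := by
      intro k z hz
      obtain ⟨j1, j2, j3, j4, j5⟩ := cf_inv hns k
      have hq : (0:ℝ) < (cfPQ D k).2 := by exact_mod_cast j1
      rw [hz, eq_div_iff hq.ne'] at j4
      apply sqrt_ne_int hns (z * (cfPQ D k).2 - (cfPQ D k).1)
      push_cast; linarith
    have hfin := cf_double _ (2*c) h2 hirr hdbl c
    rw [hdbl, show 2*c+2*c+1 = T+1 by omega, ← hαT] at hfin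
    have := (cf_rec (Real.sqrt D) 0 (h2 _ (by omega))).1
    simp only [zero_add] at this
    linarith
end

section
/- If p is a prime number with p ≡ 1 (mod 4), then T_p, the period length of the continued fraction expansion of √p, is odd. -/
/-- The step map on states `(Q_{k-1}, P_k, Q_k)`, where `r = ⌊√p⌋`. -/
def cfStep (r : ℤ) (s : ℤ × ℤ × ℤ) : ℤ × ℤ × ℤ :=
  (s.2.2, (s.2.1 + r) / s.2.2 * s.2.2 - s.2.1,
    s.1 + (s.2.1 + r) / s.2.2 * (s.2.1 - ((s.2.1 + r) / s.2.2 * s.2.2 - s.2.1)))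

/-- Reversal of a state. -/
def cfRev (s : ℤ × ℤ × ℤ) : ℤ × ℤ × ℤ := (s.2.2, s.2.1, s.1)

/-- Reduced states. -/
def cfRed (p r : ℤ) (s : ℤ × ℤ × ℤ) : Prop :=
  0 < s.1 ∧ 0 < s.2.2 ∧ 0 < s.2.1 ∧ s.2.1 ≤ r ∧ r < s.2.1 + s.1 ∧ r < s.2.1 + s.2.2 ∧
    s.2.1 ^ 2 + s.1 * s.2.2 = p

/-- The complete quotient of a state. -/
noncomputable def cfVal (x : ℝ) (s : ℤ × ℤ × ℤ) : ℝ := ((s.2.1 : ℝ) + x) / (s.2.2 : ℝ)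

theorem cfRed_quot {p r : ℤ} (h2 : p < (r + 1) ^ 2) {s : ℤ × ℤ × ℤ}
    (hs : cfRed p r s) : 1 ≤ (s.2.1 + r) / s.2.2 := by
  obtain ⟨Q, P, Q'⟩ := s
  obtain ⟨a1, a2, a3, a4, a5, a6, a7⟩ := hs
  simp only at *
  rw [Int.le_ediv_iff_mul_le a2]
  by_contra hc
  push Not at hc
  have e1 : P + r + 1 ≤ Q' := by linarith
  have e2 : r + 1 - P ≤ Q := by linarith
  have : (r + 1 - P) * (P + r + 1) ≤ Q * Q' :=
    mul_le_mul e2 e1 (by linarith) (by linarith)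
  nlinarith

theorem cfRed_step {p r : ℤ} (h1 : r ^ 2 < p) (h2 : p < (r + 1) ^ 2) {s : ℤ × ℤ × ℤ}
    (hs : cfRed p r s) : cfRed p r (cfStep r s) := by
  have ha := cfRed_quot h2 hs
  obtain ⟨Q, P, Q'⟩ := s
  obtain ⟨a1, a2, a3, a4, a5, a6, a7⟩ := hs
  simp only [cfRed, cfStep] at *
  have b1 := Int.ediv_mul_le (P + r) a2.ne'
  have b2 := Int.lt_ediv_add_one_mul_self (P + r) a2
  generalize (P + r) / Q' = a at *
  obtain ⟨P1, hP1⟩ : ∃ P1, P1 = a * Q' - P := ⟨_, rfl⟩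
  rw [← hP1]
  obtain ⟨Q2, hQ2⟩ : ∃ Q2, Q2 = Q + a * (P - P1) := ⟨_, rfl⟩
  rw [← hQ2]
  have haQ : Q' ≤ a * Q' := by nlinarith
  have c1 : P1 ≤ r := by linarith
  have c2 : r < P1 + Q' := by linarith
  have c3 : 0 < P1 := by
    by_contra hc
    push Not at hc
    linarith
  have c4 : P1 ^ 2 + Q' * Q2 = p := by
    rw [hQ2, ← a7, hP1]; ring
  have c5 : 0 < Q' * Q2 := by nlinarith
  have c6 : 0 < Q2 := by
    by_contra hc
    push Not at hc
    nlinarith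
  refine ⟨a2, c6, c3, c1, c2, ?_, c4⟩
  by_contra hc
  push Not at hc
  have e1 : Q2 ≤ r - P1 := by linarith
  have e2 : Q' ≤ P1 + r := by linarith
  have : Q' * Q2 ≤ (P1 + r) * (r - P1) := mul_le_mul e2 e1 c6.le (by linarith)
  nlinarith

theorem cfStep_rev {p r : ℤ} {s : ℤ × ℤ × ℤ}
    (hs : cfRed p r s) : cfStep r (cfRev (cfStep r s)) = cfRev s := by
  obtain ⟨Q, P, Q'⟩ := s
  obtain ⟨a1, a2, a3, a4, a5, a6, a7⟩ := hs
  simp only [cfRev, cfStep] at *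
  have key : ((P + r) / Q' * Q' - P + r) / Q' = (P + r) / Q' := by
    have : (P + r) / Q' * Q' - P + r = (r - P) + (P + r) / Q' * Q' := by ring
    rw [this, Int.add_mul_ediv_right _ _ a2.ne', Int.ediv_eq_zero_of_lt (by linarith) (by linarith)]
    ring
  rw [key]
  ext <;> simp only <;> ring

theorem cfStep_inj {p r : ℤ} {s t : ℤ × ℤ × ℤ} (hs : cfRed p r s) (ht : cfRed p r t)
    (h : cfStep r s = cfStep r t) : s = t := by
  have := cfStep_rev hs
  rw [h, cfStep_rev ht] at this
  obtain ⟨Q, P, Q'⟩ := s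
  obtain ⟨Q1, P1, Q1'⟩ := t
  simp only [cfRev, Prod.mk.injEq] at this ⊢
  tauto

theorem cfVal_floor {r : ℤ} {x : ℝ} (hx1 : (r : ℝ) ≤ x) (hx2 : x < r + 1) {s : ℤ × ℤ × ℤ}
    (hs : 0 < s.2.2) : ⌊cfVal x s⌋ = (s.2.1 + r) / s.2.2 := by
  obtain ⟨Q, P, Q'⟩ := s
  simp only [cfVal] at *
  have b1 := Int.ediv_mul_le (P + r) hs.ne'
  have b2 := Int.lt_ediv_add_one_mul_self (P + r) hs
  generalize (P + r) / Q' = a at *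
  have b3 : P + r + 1 ≤ (a + 1) * Q' := b2
  have hs' : (0 : ℝ) < Q' := by exact_mod_cast hs
  have b1' : (a : ℝ) * Q' ≤ P + r := by exact_mod_cast b1
  have b3' : (P : ℝ) + r + 1 ≤ (a + 1) * Q' := by exact_mod_cast b3
  rw [Int.floor_eq_iff, le_div_iff₀ hs', div_lt_iff₀ hs']
  constructor <;> linarith

theorem cfVal_step {p r : ℤ} (h1 : r ^ 2 < p) (h2 : p < (r + 1) ^ 2) {x : ℝ}
    (hx1 : (r : ℝ) < x) (hx2 : x < r + 1) (hx : x ^ 2 = p) {s : ℤ × ℤ × ℤ}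
    (hs : cfRed p r s) :
    cfVal x (cfStep r s) = 1 / (cfVal x s - (⌊cfVal x s⌋ : ℝ)) := by
  have hr := cfRed_step h1 h2 hs
  rw [cfVal_floor hx1.le hx2 hs.2.1]
  obtain ⟨Q, P, Q'⟩ := s
  obtain ⟨a1, a2, a3, a4, a5, a6, a7⟩ := hs
  obtain ⟨c1, c2, c3, c4, c5, c6, c7⟩ := hr
  simp only [cfVal, cfStep] at *
  generalize (P + r) / Q' = a at *
  obtain ⟨P1, hP1⟩ : ∃ P1, P1 = a * Q' - P := ⟨_, rfl⟩
  rw [← hP1] at c2 c4 c7 ⊢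
  obtain ⟨Q2, hQ2⟩ : ∃ Q2, Q2 = Q + a * (P - P1) := ⟨_, rfl⟩
  rw [← hQ2] at c2 c7 ⊢
  have d1 : (0 : ℝ) < Q' := by exact_mod_cast a2
  have d2 : (0 : ℝ) < Q2 := by exact_mod_cast c2
  have d3 : (P1 : ℝ) ≤ r := by exact_mod_cast c4
  have d4 : (P1 : ℝ) ^ 2 + Q' * Q2 = p := by exact_mod_cast c7
  have d5 : (P1 : ℝ) = a * Q' - P := by exact_mod_cast hP1
  have d6 : ((P : ℝ) + x) / Q' - a = (x - P1) / Q' := by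
    rw [d5]; field_simp; ring
  have d7 : 0 < x - P1 := by linarith
  rw [d6, one_div_div, div_eq_div_iff d2.ne' d7.ne']
  linarith

theorem cfVal_gt_one {p r : ℤ} (h2 : p < (r + 1) ^ 2) {x : ℝ}
    (hx1 : (r : ℝ) < x) {s : ℤ × ℤ × ℤ}
    (hs : cfRed p r s) : 1 < cfVal x s := by
  have ha := cfRed_quot h2 hs
  rw [Int.le_ediv_iff_mul_le hs.2.1] at ha
  have h : (0 : ℝ) < s.2.2 := by exact_mod_cast hs.2.1
  have ha' : 1 * (s.2.2 : ℝ) ≤ s.2.1 + r := by exact_mod_cast ha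
  rw [cfVal, lt_div_iff₀ h]
  linarith

theorem cfVal_inj {p r : ℤ} {x : ℝ} (hx : Irrational x) {s t : ℤ × ℤ × ℤ}
    (hs : cfRed p r s) (ht : cfRed p r t) (h : cfVal x s = cfVal x t) : s = t := by
  obtain ⟨Q, P, Q'⟩ := s
  obtain ⟨R, S, R'⟩ := t
  obtain ⟨a1, a2, a3, a4, a5, a6, a7⟩ := hs
  obtain ⟨b1, b2, b3, b4, b5, b6, b7⟩ := ht
  simp only [cfVal] at *
  have d1 : (0 : ℝ) < Q' := by exact_mod_cast a2
  have d2 : (0 : ℝ) < R' := by exact_mod_cast b2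
  rw [div_eq_div_iff d1.ne' d2.ne'] at h
  have e1 : Q' = R' := by
    by_contra hne
    have hne' : (R' : ℝ) - Q' ≠ 0 := by
      rw [sub_ne_zero]; exact_mod_cast (Ne.symm hne)
    apply hx
    refine ⟨((S * Q' - P * R' : ℤ) : ℚ) / ((R' - Q' : ℤ) : ℚ), ?_⟩
    push_cast
    rw [div_eq_iff hne']
    linarith
  subst e1
  have e2 : P = S := by
    have := mul_right_cancel₀ d1.ne' h
    have : (P : ℝ) = S := by linarith
    exact_mod_cast this
  subst e2
  have e3 : Q = R := by
    have : Q * Q' = R * Q' := by linarith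
    exact mul_right_cancel₀ a2.ne' this
  rw [e3]

/-- The state sequence. -/
def cfSeq (p r : ℤ) : ℕ → ℤ × ℤ × ℤ
  | 0 => (p - r ^ 2, r, 1)
  | k + 1 => cfStep r (cfSeq p r k)

theorem cfSeq_parity (p r : ℤ) (k : ℕ) :
    ¬ (2 ∣ (cfSeq p r k).1 ∧ 2 ∣ (cfSeq p r k).2.2) := by
  induction k with
  | zero => simp [cfSeq]
  | succ k ih =>
    simp only [cfSeq, cfStep]
    generalize cfSeq p r k = s at *
    obtain ⟨Q, P, Q'⟩ := s
    simp only at *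
    generalize (P + r) / Q' = a at *
    rintro ⟨⟨u, hu⟩, ⟨v, hv⟩⟩
    apply ih
    refine ⟨⟨v - a * (P - a * u), ?_⟩, ⟨u, hu⟩⟩
    subst hu
    linarith

theorem stmt_8 (p : ℕ) (hp : p.Prime) (h1 : p % 4 = 1) :
    Odd (cfPeriod (Real.sqrt p)) := by
  obtain ⟨x, hxdef⟩ : ∃ x, x = Real.sqrt p := ⟨_, rfl⟩
  rw [← hxdef]
  have hirr : Irrational x := by rw [hxdef]; exact hp.irrational_sqrt
  have hx0 : 0 ≤ x := by rw [hxdef]; exact Real.sqrt_nonneg _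
  have hxx : x ^ 2 = ((p : ℤ) : ℝ) := by
    rw [hxdef, Real.sq_sqrt (by positivity)]; simp
  obtain ⟨r, hr⟩ : ∃ r : ℤ, r = ⌊x⌋ := ⟨_, rfl⟩
  have hx2 : x < r + 1 := by rw [hr]; exact Int.lt_floor_add_one x
  have hx1 : (r : ℝ) < x := by
    refine lt_of_le_of_ne (by rw [hr]; exact Int.floor_le x) ?_
    intro h
    exact hirr ⟨(r : ℚ), by simpa using h⟩
  have hp2 := hp.two_le
  have hr1 : 1 ≤ r := by
    rw [hr, Int.le_floor]
    push_cast
    have : (2 : ℝ) ≤ ((p : ℤ) : ℝ) := by exact_mod_cast hp2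
    nlinarith
  have hr1' : (1 : ℝ) ≤ r := by exact_mod_cast hr1
  have g1 : r ^ 2 < (p : ℤ) := by
    have : (r : ℝ) ^ 2 < ((p : ℤ) : ℝ) := by rw [← hxx]; nlinarith
    exact_mod_cast this
  have g2 : (p : ℤ) < (r + 1) ^ 2 := by
    have : ((p : ℤ) : ℝ) < ((r : ℝ) + 1) ^ 2 := by rw [← hxx]; nlinarith
    exact_mod_cast this
  let s := cfSeq (p : ℤ) r
  have hs1 : ∀ k, s (k + 1) = cfStep r (s k) := fun k => rfl
  have hs0 : s 0 = ((p : ℤ) - r ^ 2, r, 1) := rfl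
  have hred : ∀ k, cfRed p r (s k) := by
    intro k
    induction k with
    | zero =>
      rw [hs0]
      refine ⟨?_, ?_, ?_, ?_, ?_, ?_, ?_⟩ <;> simp only <;> linarith
    | succ k ih => rw [hs1]; exact cfRed_step g1 g2 ih
  have hinj : ∀ i j, s (i + 1) = s (j + 1) → s i = s j := fun i j h =>
    cfStep_inj (hred i) (hred j) h
  have hback : ∀ i j, s i = s (i + j) → s 0 = s j := by
    intro i
    induction i with
    | zero => intro j h; simpa using h
    | succ i ih =>
      intro j h
      apply ih
      apply hinj
      rw [h]; congr 1; omega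
  have hfwd : ∀ N, s N = s 0 → ∀ k, s (k + N) = s k := by
    intro N hN k
    induction k with
    | zero => simpa using hN
    | succ k ih =>
      rw [show k + 1 + N = (k + N) + 1 by omega, hs1, ih, hs1]
  -- complete quotients
  have hval : ∀ k, cfVal x (s (k + 1)) = 1 / (cfVal x (s k) - (⌊cfVal x (s k)⌋ : ℝ)) :=
    fun k => cfVal_step g1 g2 hx1 hx2 hxx (hred k)
  have halpha : ∀ k, cfAlpha x (k + 1) = cfVal x (s (k + 1)) := by
    intro k
    induction k with
    | zero =>
      rw [hval]
      have : cfVal x (s 0) = x + r := by rw [hs0]; simp [cfVal]; ring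
      rw [this, Int.floor_add_intCast]
      simp only [cfAlpha]
      push_cast
      congr 1
      ring
    | succ k ih => rw [hval, ← ih]; rfl
  have hA : ∀ k, cfA x (k + 1) = ⌊cfVal x (s (k + 1))⌋ := fun k => by rw [cfA, halpha]
  -- periodicity
  obtain ⟨N, hN0, hN⟩ : ∃ N, 0 < N ∧ s N = s 0 := by
    have hfin : (Set.Icc (0 : ℤ) p ×ˢ Set.Icc (0 : ℤ) p ×ˢ Set.Icc (0 : ℤ) p).Finite :=
      (Set.finite_Icc _ _).prod ((Set.finite_Icc _ _).prod (Set.finite_Icc _ _))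
    have hmem : ∀ k, s k ∈ (Set.Icc (0 : ℤ) p ×ˢ Set.Icc (0 : ℤ) p ×ˢ Set.Icc (0 : ℤ) p) := by
      intro k
      obtain ⟨a1, a2, a3, a4, a5, a6, a7⟩ := hred k
      refine ⟨⟨a1.le, ?_⟩, ⟨a3.le, ?_⟩, ⟨a2.le, ?_⟩⟩ <;> nlinarith
    obtain ⟨i, j, hij, h⟩ := hfin.exists_lt_map_eq_of_forall_mem hmem
    refine ⟨j - i, by omega, ?_⟩
    refine (hback i (j - i) ?_).symm
    rw [h]; congr 1; omega
  have hper : ∀ n, 0 < n → s n = s 0 →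
      n ∈ {l : ℕ | 0 < l ∧ ∀ k : ℕ, 1 ≤ k → cfA x (k + l) = cfA x k} := by
    intro n hn0 hn
    refine ⟨hn0, ?_⟩
    intro k hk
    obtain ⟨k, rfl⟩ : ∃ k', k = k' + 1 := ⟨k - 1, by omega⟩
    rw [show k + 1 + n = (k + n) + 1 by omega, hA, hA,
      show k + n + 1 = (k + 1) + n by omega, hfwd n hn]
  have hT := Nat.sInf_mem ⟨N, hper N hN0 hN⟩
  have hmin : ∀ n, 0 < n → s n = s 0 → cfPeriod x ≤ n := fun n a b => Nat.sInf_le (hper n a b)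
  change cfPeriod x ∈ _ at hT
  generalize cfPeriod x = T at *
  obtain ⟨hT0, hT⟩ := hT
  -- the states are periodic with period T
  have hsT : s T = s 0 := by
    have hd : ∀ k, |cfVal x (s (k + 1 + 1)) - cfVal x (s (k + 1 + 1 + T))| =
        |cfVal x (s (k + 1)) - cfVal x (s (k + 1 + T))| *
          (cfVal x (s (k + 1 + 1)) * cfVal x (s (k + 1 + 1 + T))) := by
      intro k
      have e := hT (k + 1) (by omega)
      rw [show k + 1 + T = (k + T) + 1 by omega, hA, hA] at e
      have u1 := cfVal_gt_one g2 hx1 (hred (k + 1 + 1))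
      have u2 := cfVal_gt_one g2 hx1 (hred (k + T + 1 + 1))
      have v1 := hval (k + 1)
      have v2 := hval (k + T + 1)
      rw [e] at v2
      rw [show k + 1 + 1 + T = k + T + 1 + 1 by omega, show k + 1 + T = k + T + 1 by omega]
      generalize cfVal x (s (k + 1 + 1)) = A at *
      generalize cfVal x (s (k + T + 1 + 1)) = B at *
      generalize cfVal x (s (k + 1)) = C at *
      generalize cfVal x (s (k + T + 1)) = D at *
      have w1 : C - ⌊C⌋ = 1 / A := by rw [v1, one_div_one_div]
      have w2 : D - ⌊C⌋ = 1 / B := by rw [v2, one_div_one_div]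
      have w3 : C - D = (B - A) / (A * B) := by
        have : C - D = 1 / A - 1 / B := by linarith
        rw [this]; field_simp
      have hAB : 0 < A * B := by positivity
      rw [w3, abs_div, abs_of_pos hAB, div_mul_cancel₀ _ hAB.ne', abs_sub_comm]
    have heq : cfVal x (s (0 + 1)) = cfVal x (s (0 + 1 + T)) := by
      by_contra hne
      have hpos : 0 < |cfVal x (s (0 + 1)) - cfVal x (s (0 + 1 + T))| :=
        abs_pos.mpr (sub_ne_zero.mpr hne)
      have hgrow : ∀ k, |cfVal x (s (0 + 1)) - cfVal x (s (0 + 1 + T))| <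
          |cfVal x (s (k + 1 + 1)) - cfVal x (s (k + 1 + 1 + T))| := by
        intro k
        have u1 := cfVal_gt_one g2 hx1 (hred (k + 1 + 1))
        have u2 := cfVal_gt_one g2 hx1 (hred (k + 1 + 1 + T))
        have u3 : 1 < cfVal x (s (k + 1 + 1)) * cfVal x (s (k + 1 + 1 + T)) := by nlinarith
        rw [hd]
        induction k with
        | zero => exact lt_mul_of_one_lt_right hpos u3
        | succ k ih =>
          have u1' := cfVal_gt_one g2 hx1 (hred (k + 1 + 1))
          have u2' := cfVal_gt_one g2 hx1 (hred (k + 1 + 1 + T))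
          have := ih u1' u2' (by nlinarith)
          rw [← hd] at this
          exact this.trans (lt_mul_of_one_lt_right (hpos.trans this) u3)
      have := hgrow (N - 1)
      rw [show N - 1 + 1 + 1 = (0 + 1) + N by omega,
        show 0 + 1 + N + T = (0 + 1 + T) + N by omega, hfwd N hN, hfwd N hN] at this
      exact lt_irrefl _ this
    exact (hback (0 + 1) T (cfVal_inj hirr (hred _) (hred _) heq)).symm
  -- symmetry
  have hsym : ∀ j, j ≤ T → cfRev (s (j + 1)) = s (T - j) := by
    intro j
    induction j with
    | zero =>
      intro _
      rw [Nat.sub_zero, hsT, hs1, hs0]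
      simp only [cfRev, cfStep, Int.ediv_one]
      ext <;> simp only <;> ring
    | succ j ih =>
      intro hj
      have h3 := ih (by omega)
      have hq : cfRed p r (cfRev (s (j + 1 + 1))) := by
        obtain ⟨a1, a2, a3, a4, a5, a6, a7⟩ := hred (j + 1 + 1)
        exact ⟨a2, a1, a3, a4, a6, a5, by simp only [cfRev]; linarith⟩
      apply cfStep_inj hq (hred _)
      rw [hs1 (j + 1), cfStep_rev (hred (j + 1)), h3, ← hs1]
      congr 1; omega
  by_contra hodd
  rw [Nat.not_odd_iff_even] at hodd
  obtain ⟨m, hm⟩ := hodd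
  have hmid := hsym m (by omega)
  rw [show T - m = m by omega, hs1] at hmid
  have hQ1 : (s m).2.2 ≠ 1 := by
    intro hq
    have hm0 : s m = s 0 := by
      obtain ⟨a1, a2, a3, a4, a5, a6, a7⟩ := hred m
      have e1 : (s m).2.1 = r := by rw [hq] at a6; omega
      rw [hs0]
      rw [hq, e1] at a7
      ext <;> simp only
      · linarith
      · exact e1
      · exact hq
    have := hmin m (by omega) hm0
    omega
  have hpar := cfSeq_parity p r m
  change ¬ (2 ∣ (s m).1 ∧ 2 ∣ (s m).2.2) at hpar
  have hR := hred m
  have hquot := cfRed_quot g2 hR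
  generalize s m = t at *
  obtain ⟨Q, P, Q'⟩ := t
  obtain ⟨a1, a2, a3, a4, a5, a6, a7⟩ := hR
  simp only [cfRev, cfStep, Prod.mk.injEq] at *
  generalize (P + r) / Q' = a at *
  have h2P : 2 * P = a * Q' := by linarith [hmid.2.1]
  have hdvd : Q' ∣ p * 2 := ⟨a * P + 2 * Q, by rw [← a7]; linear_combination P * h2P⟩
  have hQle : Q' ≤ 2 * P := by nlinarith
  have hpp : Prime (p : ℤ) := Nat.prime_iff_prime_int.mp hp
  by_cases hpQ : (p : ℤ) ∣ Q'
  · have := Int.le_of_dvd a2 hpQ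
    have hr2 : r < 2 := by nlinarith
    have : r = 1 := by omega
    subst this
    omega
  · have hcop : IsCoprime Q' (p : ℤ) := ((Prime.coprime_iff_not_dvd hpp).mpr hpQ).symm
    have h2 := hcop.dvd_of_dvd_mul_left hdvd
    have := Int.le_of_dvd (by norm_num) h2
    have hQ2 : Q' = 2 := by omega
    subst hQ2
    apply hpar
    refine ⟨?_, dvd_refl _⟩
    rcases Int.even_or_odd' P with ⟨c, hc | hc⟩
    · exfalso
      subst hc
      ring_nf at a7
      omega
    · subst hc
      ring_nf at a7
      have : (p : ℤ) % 4 = 1 := by omega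
      omega
end
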